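/- Let n ≥ 1, ν > 0, and let h = (h₁,…,hₙ) : ℝⁿ → ℝⁿ be smooth and satisfy the polynomial decay condition. Then the Cauchy problem for the multivariate viscous Burgers system on [0,∞)×ℝⁿ with initial data h has a global classical solution u = (u₁,…,uₙ) whose components lie in C^{1,2}([0,∞)×ℝⁿ). Moreover, there exist constants C₀ ≥ max_{1≤i≤n} sup_{x∈ℝⁿ}|hᵢ(x)| and C*ₙ > 0 such that, setting ρ_l := 1/(4·C*ₙ·(C₀ + l − 1)) for l ≥ 1 and T_l := ρ₁ + ⋯ + ρ_l (so that T_l → ∞ as l → ∞), one has max_{1≤i≤n} |uᵢ|_{1,2;[0,T_l]×ℝⁿ} ≤ C*ₙ·(C₀ + l) for every l ≥ 1; in particular the growth of the solution in the |·|_{1,2} norm is at most linear in the time-step index l. -/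

import Mathlib

open Set Filter

noncomputable section

abbrev E (n : ℕ) := EuclideanSpace ℝ (Fin n)

/-- Partial derivative of `f` in the `j`-th coordinate direction. -/
noncomputable def pd {n : ℕ} (f : E n → ℝ) (j : Fin n) (x : E n) : ℝ :=
  fderiv ℝ f x (EuclideanSpace.single j 1)

/-- Supremum norm `|w|₀` over the domain `[0,T] × ℝⁿ`. -/
noncomputable def sup0 {n : ℕ} (T : ℝ) (w : ℝ → E n → ℝ) : ℝ :=
  ⨆ (t : Icc (0:ℝ) T) (x : E n), |w t.1 x|

/-- The norm `|w|_{1,2;[0,T]×ℝⁿ} = |w|₀ + Σᵢ|∂w/∂xᵢ|₀ + |∂w/∂t|₀ + Σ_{i,j}|∂²w/∂xᵢ∂xⱼ|₀`. -/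
noncomputable def norm12 {n : ℕ} (T : ℝ) (w : ℝ → E n → ℝ) : ℝ :=
  sup0 T w + (∑ j : Fin n, sup0 T fun t x => pd (w t) j x)
    + sup0 T (fun t x => deriv (fun s => w s x) t)
    + ∑ j : Fin n, ∑ k : Fin n, sup0 T fun t x => pd (pd (w t) j) k x


/-!
Replacing the drift `-u` by `χ(u)`, where `χ` is smooth, bounded, and equal to `-s` for
`|s| ≤ sup |h|`, makes the nonlinearity globally Lipschitz. Since one spatial derivative of the
heat flow costs only `t^(-1/2)`, in the norms weighted by `e^{-Kt}` with `K` large Duhamel's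
operator absorbs this derivative with an arbitrarily small constant: the Picard iterates of
`u = e^{νtΔ} h + ∫₀ᵗ e^{ν(t-s)Δ} (χ(u)·∇u)(s) ds` converge globally in time, and the spatial
derivatives of the limit up to second order are `O(e^{2Kt})`. By the maximum principle
`|u| ≤ sup |h|`, so that `χ(u) = -u` and `u` solves the Burgers system. Finally,
`T_l ≤ (1 + log l) / (4C*ₙ)` once `C₀ ≥ 1`, hence `e^{2K T_l}` is at most linear in `l` as soon as
`C*ₙ ≥ K`.
-/

section Gaussian

open MeasureTheory ProbabilityTheory

variable {n : ℕ}

lemma abs_coord_le_norm (z : E n) (j : Fin n) : |z j| ≤ ‖z‖ := by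
  simpa using PiLp.norm_apply_le z j

lemma integrable_of_continuous_of_bounded {Ω : Type*} [MeasurableSpace Ω] [TopologicalSpace Ω]
    [OpensMeasurableSpace Ω] {μ : Measure Ω} [IsFiniteMeasure μ] {g : Ω → ℝ} (hg : Continuous g)
    {C : ℝ} (hC : ∀ x, |g x| ≤ C) : Integrable g μ :=
  (integrable_const C).mono' hg.measurable.aestronglyMeasurable (.of_forall hC)

lemma integrable_norm_stdGaussian : Integrable (fun z : E n => ‖z‖) (stdGaussian (E n)) :=
  IsGaussian.integrable_id.norm

lemma integrable_coord_mul_stdGaussian {g : E n → ℝ} (hg : Continuous g) {C : ℝ}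
    (hC : ∀ x, |g x| ≤ C) (j : Fin n) :
    Integrable (fun z => z j * g z) (stdGaussian (E n)) := by
  refine (integrable_norm_stdGaussian.mul_const C).mono' (by fun_prop) (.of_forall fun z => ?_)
  rw [Real.norm_eq_abs, abs_mul]
  exact mul_le_mul (abs_coord_le_norm z j) (hC z) (abs_nonneg _) (norm_nonneg _)

lemma hasDerivAt_gaussianPDFReal_zero_one (s : ℝ) :
    HasDerivAt (gaussianPDFReal 0 1) (-(s * gaussianPDFReal 0 1 s)) s := by
  have hexp : HasDerivAt (fun s : ℝ => -(s - 0) ^ 2 / (2 * ((1 : NNReal) : ℝ))) (-s) s := by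
    have := (((hasDerivAt_id s).sub_const 0).pow 2).neg.div_const (2 * ((1 : NNReal) : ℝ))
    refine this.congr_deriv ?_
    simp only [id_eq, NNReal.coe_one]
    ring
  rw [gaussianPDFReal_def]
  refine (hexp.exp.const_mul _).congr_deriv ?_
  ring

lemma integral_mul_eq_integral_deriv_gaussianReal {f f' : ℝ → ℝ}
    (hf : ∀ s, HasDerivAt f (f' s) s) (hf' : Continuous f') {C C' : ℝ}
    (hC : ∀ s, |f s| ≤ C) (hC' : ∀ s, |f' s| ≤ C') :
    ∫ s, s * f s ∂gaussianReal 0 1 = ∫ s, f' s ∂gaussianReal 0 1 := by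
  have hcont : Continuous f := continuous_iff_continuousAt.2 fun s => (hf s).continuousAt
  have hdens : ∀ {g : ℝ → ℝ}, Integrable g (gaussianReal 0 1) →
      Integrable fun s => gaussianPDFReal 0 1 s * g s := fun {g} hg => by
    rw [gaussianReal_of_var_ne_zero 0 one_ne_zero,
      integrable_withDensity_iff_integrable_smul' (by fun_prop)
        (.of_forall fun _ => gaussianPDF_lt_top)] at hg
    simpa using hg
  have hid : Integrable (fun s : ℝ => s * f s) (gaussianReal 0 1) := by
    have hs : Integrable (fun s : ℝ => |s|) (gaussianReal 0 1) := IsGaussian.integrable_id.norm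
    refine (hs.mul_const C).mono' (by fun_prop) (.of_forall fun s => ?_)
    rw [Real.norm_eq_abs, abs_mul]
    exact mul_le_mul_of_nonneg_left (hC s) (abs_nonneg s)
  have parts := integral_mul_deriv_eq_deriv_mul_of_integrable
    (fun s _ => hasDerivAt_gaussianPDFReal_zero_one s) (fun s _ => hf s)
    (hdens (integrable_of_continuous_of_bounded hf' hC'))
    ((hdens hid).neg.congr (.of_forall fun s => by simp only [Pi.neg_apply, Pi.mul_apply]; ring))
    (hdens (integrable_of_continuous_of_bounded hcont hC))
  simp only [integral_gaussianReal_eq_integral_smul one_ne_zero, smul_eq_mul]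
  rw [parts, ← integral_neg]
  exact integral_congr_ae (.of_forall fun s => by ring)

lemma integral_stdGaussian_eq_integral_insertNth {m : ℕ} (j : Fin (m + 1)) {f : E (m + 1) → ℝ}
    (hf : Integrable f (stdGaussian (E (m + 1)))) :
    ∫ z, f z ∂stdGaussian (E (m + 1)) =
      ∫ y, ∫ s, f (WithLp.toLp 2 (j.insertNth s y)) ∂gaussianReal 0 1
        ∂Measure.pi fun _ : Fin m => gaussianReal 0 1 := by
  have hpi := (measurePreserving_piFinSuccAbove (fun _ : Fin (m + 1) => gaussianReal 0 1) j).symm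
  rw [← map_pi_eq_stdGaussian] at hf ⊢
  rw [integral_map (by fun_prop) hf.1, ← hpi.integral_comp', integral_prod_symm]
  · rfl
  · exact hpi.integrable_comp_of_integrable (hf.comp_aemeasurable (by fun_prop))

lemma integral_pd_stdGaussian {g : E n → ℝ} (hg : Differentiable ℝ g) (j : Fin n)
    (hg' : Continuous (pd g j)) {C C' : ℝ} (hC : ∀ x, |g x| ≤ C) (hC' : ∀ x, |pd g j x| ≤ C') :
    ∫ z, pd g j z ∂stdGaussian (E n) = ∫ z, z j * g z ∂stdGaussian (E n) := by
  obtain _ | m := n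
  · exact j.elim0
  rw [integral_stdGaussian_eq_integral_insertNth j
      (integrable_of_continuous_of_bounded hg' hC'),
    integral_stdGaussian_eq_integral_insertNth j
      (integrable_coord_mul_stdGaussian hg.continuous hC j)]
  refine integral_congr_ae (.of_forall fun y => ?_)
  obtain ⟨p, hline⟩ : ∃ p : E (m + 1), ∀ s : ℝ,
      WithLp.toLp 2 (j.insertNth s y) = p + s • EuclideanSpace.single j (1 : ℝ) := by
    refine ⟨WithLp.toLp 2 (j.insertNth 0 y), fun s => ?_⟩
    ext i
    refine j.succAboveCases ?_ (fun i => ?_) i <;> simp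
  have hderiv : ∀ s : ℝ, HasDerivAt (fun s : ℝ => g (WithLp.toLp 2 (j.insertNth s y)))
      (pd g j (WithLp.toLp 2 (j.insertNth s y))) s := fun s => by
    simp only [hline]
    have := ((hasDerivAt_id s).smul_const (EuclideanSpace.single j (1 : ℝ))).const_add p
    simpa [pd, Function.comp_def] using (hg _).hasFDerivAt.comp_hasDerivAt s this
  have hcont : Continuous fun s : ℝ => pd g j (WithLp.toLp 2 (j.insertNth s y)) := by
    simp only [hline]
    fun_prop
  simpa using (integral_mul_eq_integral_deriv_gaussianReal hderiv hcont
    (fun s => hC _) (fun s => hC' _)).symm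

end Gaussian

section PartialDerivatives

variable {n : ℕ}

lemma fderiv_eq_sum_pd (f : E n → ℝ) (x : E n) :
    fderiv ℝ f x = ∑ j, pd f j x • (EuclideanSpace.proj j : E n →L[ℝ] ℝ) := by
  ext v
  have hv : v = ∑ j, v j • EuclideanSpace.single j (1 : ℝ) := by
    ext i; simp [Finset.sum_apply, Pi.single_apply]
  conv_lhs => rw [hv]
  simp [pd, mul_comm]

lemma norm_sum_smul_proj_le (p : Fin n → ℝ) :
    ‖∑ j, p j • (EuclideanSpace.proj j : E n →L[ℝ] ℝ)‖ ≤ ∑ j, |p j| := by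
  refine (norm_sum_le _ _).trans (Finset.sum_le_sum fun j _ => ?_)
  rw [norm_smul, Real.norm_eq_abs]
  refine mul_le_of_le_one_right (abs_nonneg _) ?_
  exact ContinuousLinearMap.opNorm_le_bound _ zero_le_one fun v => by
    simpa using abs_coord_le_norm v j

lemma pd_eq_of_hasFDerivAt {f : E n → ℝ} {p : Fin n → ℝ} {x : E n}
    (hf : HasFDerivAt f (∑ j, p j • (EuclideanSpace.proj j : E n →L[ℝ] ℝ)) x) (j : Fin n) :
    pd f j x = p j := by
  rw [pd, hf.fderiv]
  simp

lemma pd_const (c : ℝ) (j : Fin n) (x : E n) : pd (fun _ => c) j x = 0 := by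
  simp [pd]

lemma pd_add {f g : E n → ℝ} {x : E n} (hf : DifferentiableAt ℝ f x)
    (hg : DifferentiableAt ℝ g x) (j : Fin n) :
    pd (fun y => f y + g y) j x = pd f j x + pd g j x := by
  simp [pd, fderiv_fun_add hf hg]

lemma pd_sub {f g : E n → ℝ} {x : E n} (hf : DifferentiableAt ℝ f x)
    (hg : DifferentiableAt ℝ g x) (j : Fin n) :
    pd (fun y => f y - g y) j x = pd f j x - pd g j x := by
  simp [pd, fderiv_fun_sub hf hg]

lemma pd_mul {f g : E n → ℝ} {x : E n} (hf : DifferentiableAt ℝ f x)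
    (hg : DifferentiableAt ℝ g x) (j : Fin n) :
    pd (fun y => f y * g y) j x = pd f j x * g x + f x * pd g j x := by
  simp only [pd, fderiv_fun_mul hf hg, add_apply,
    smul_apply, smul_eq_mul]
  ring

lemma pd_const_mul {f : E n → ℝ} {x : E n} (hf : DifferentiableAt ℝ f x) (c : ℝ) (j : Fin n) :
    pd (fun y => c * f y) j x = c * pd f j x := by
  simp [pd, fderiv_const_mul hf]

lemma pd_sum {ι : Type*} (s : Finset ι) {f : ι → E n → ℝ} {x : E n}
    (hf : ∀ i ∈ s, DifferentiableAt ℝ (f i) x) (j : Fin n) :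
    pd (fun y => ∑ i ∈ s, f i y) j x = ∑ i ∈ s, pd (f i) j x := by
  simp [pd, fderiv_fun_sum hf]

lemma pd_comp {χ : ℝ → ℝ} (hχ : Differentiable ℝ χ) {f : E n → ℝ} {x : E n}
    (hf : DifferentiableAt ℝ f x) (j : Fin n) :
    pd (fun y => χ (f y)) j x = deriv χ (f x) * pd f j x := by
  have hcomp : fderiv ℝ (fun y => χ (f y)) x = deriv χ (f x) • fderiv ℝ f x :=
    ((hχ (f x)).hasDerivAt.comp_hasFDerivAt x hf.hasFDerivAt).fderiv
  simp [pd, hcomp]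

lemma pd_comp_add_smul {f : E n → ℝ} (hf : Differentiable ℝ f) (x z : E n) (a : ℝ) (j : Fin n) :
    pd (fun z => f (x + a • z)) j z = a * pd f j (x + a • z) := by
  have hinner : HasFDerivAt (fun z : E n => x + a • z) (a • ContinuousLinearMap.id ℝ (E n)) z :=
    ((hasFDerivAt_id z).const_smul a).const_add x
  have hcomp := ((hf (x + a • z)).hasFDerivAt.comp z hinner).fderiv
  simp only [Function.comp_def] at hcomp
  simp [pd, hcomp]

lemma contDiff_pd {f : E n → ℝ} (hf : ContDiff ℝ (⊤ : ℕ∞) f) (j : Fin n) :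
    ContDiff ℝ (⊤ : ℕ∞) (pd f j) :=
  (hf.fderiv_right (by simp)).clm_apply contDiff_const

lemma exists_norm_iteratedFDeriv_pd_le {f : E n → ℝ} (hf : ContDiff ℝ (⊤ : ℕ∞) f)
    (hb : ∀ k, ∃ C, ∀ x, ‖iteratedFDeriv ℝ k f x‖ ≤ C) (j : Fin n) (k : ℕ) :
    ∃ C, ∀ x, ‖iteratedFDeriv ℝ k (pd f j) x‖ ≤ C := by
  obtain ⟨C, hC⟩ := hb (k + 1)
  let L : (E n →L[ℝ] ℝ) →L[ℝ] ℝ :=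
    ContinuousLinearMap.apply ℝ ℝ (EuclideanSpace.single j (1 : ℝ))
  have hf' : ContDiff ℝ (⊤ : ℕ∞) (fderiv ℝ f) := hf.fderiv_right (by simp)
  refine ⟨‖L‖ * C, fun x => ?_⟩
  calc ‖iteratedFDeriv ℝ k (pd f j) x‖ = ‖iteratedFDeriv ℝ k (L ∘ fderiv ℝ f) x‖ := rfl
    _ ≤ ‖L‖ * ‖iteratedFDeriv ℝ k (fderiv ℝ f) x‖ :=
        L.norm_iteratedFDeriv_comp_left hf'.contDiffAt (by exact_mod_cast le_top)
    _ ≤ ‖L‖ * C := by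
        rw [norm_iteratedFDeriv_fderiv]
        gcongr
        exact hC x

end PartialDerivatives

section Regularity

variable {n : ℕ}

/-- Functions of `(t, x)` that are jointly continuous, and bounded on the slab `(-∞, T] × ℝⁿ` for
every `T`. -/
structure SlabBdd (f : ℝ → E n → ℝ) : Prop where
  continuous : Continuous fun p : ℝ × E n => f p.1 p.2
  exists_abs_le : ∀ T, ∃ C, ∀ t ≤ T, ∀ x, |f t x| ≤ C

/-- Functions of `(t, x)` all of whose iterated spatial partial derivatives of order at most `m`
exist and are `SlabBdd`. -/
def SlabBddC : ℕ → (ℝ → E n → ℝ) → Prop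
  | 0, f => SlabBdd f
  | m + 1, f => SlabBdd f ∧ (∀ t, Differentiable ℝ (f t)) ∧ ∀ j, SlabBddC m fun t => pd (f t) j

lemma SlabBdd.continuous_left {f : ℝ → E n → ℝ} (hf : SlabBdd f) (x : E n) :
    Continuous fun t => f t x :=
  hf.continuous.comp (by fun_prop : Continuous fun t : ℝ => (t, x))

lemma SlabBdd.continuous_right {f : ℝ → E n → ℝ} (hf : SlabBdd f) (t : ℝ) : Continuous (f t) :=
  hf.continuous.comp (by fun_prop : Continuous fun x : E n => (t, x))

lemma SlabBdd.add {f g : ℝ → E n → ℝ} (hf : SlabBdd f) (hg : SlabBdd g) :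
    SlabBdd fun t x => f t x + g t x := by
  refine ⟨hf.continuous.add hg.continuous, fun T => ?_⟩
  obtain ⟨C, hC⟩ := hf.exists_abs_le T
  obtain ⟨D, hD⟩ := hg.exists_abs_le T
  exact ⟨C + D, fun t ht x => (abs_add_le _ _).trans (add_le_add (hC t ht x) (hD t ht x))⟩

lemma SlabBdd.mul {f g : ℝ → E n → ℝ} (hf : SlabBdd f) (hg : SlabBdd g) :
    SlabBdd fun t x => f t x * g t x := by
  refine ⟨hf.continuous.mul hg.continuous, fun T => ?_⟩
  obtain ⟨C, hC⟩ := hf.exists_abs_le T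
  obtain ⟨D, hD⟩ := hg.exists_abs_le T
  refine ⟨C * D, fun t ht x => ?_⟩
  rw [abs_mul]
  exact mul_le_mul (hC t ht x) (hD t ht x) (abs_nonneg _) ((abs_nonneg _).trans (hC t ht x))

lemma SlabBdd.comp {χ : ℝ → ℝ} (hχ : Continuous χ) {f : ℝ → E n → ℝ} (hf : SlabBdd f) :
    SlabBdd fun t x => χ (f t x) := by
  refine ⟨hχ.comp hf.continuous, fun T => ?_⟩
  obtain ⟨C, hC⟩ := hf.exists_abs_le T
  obtain ⟨D, hD⟩ := (isCompact_Icc (a := -C) (b := C)).exists_bound_of_continuousOn hχ.continuousOn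
  exact ⟨D, fun t ht x => hD _ (abs_le.1 (hC t ht x))⟩

lemma SlabBddC.slabBdd {m : ℕ} {f : ℝ → E n → ℝ} (hf : SlabBddC m f) : SlabBdd f := by
  cases m with
  | zero => exact hf
  | succ m => exact hf.1

lemma SlabBddC.differentiable {m : ℕ} {f : ℝ → E n → ℝ} (hf : SlabBddC (m + 1) f) (t : ℝ) :
    Differentiable ℝ (f t) :=
  hf.2.1 t

lemma slabBddC_pd {m : ℕ} {f : ℝ → E n → ℝ} (hf : SlabBddC (m + 1) f) (j : Fin n) :
    SlabBddC m fun t => pd (f t) j :=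
  hf.2.2 j

lemma SlabBddC.of_succ {m : ℕ} {f : ℝ → E n → ℝ} (hf : SlabBddC (m + 1) f) : SlabBddC m f := by
  induction m generalizing f with
  | zero => exact hf.1
  | succ m ih => exact ⟨hf.1, hf.2.1, fun j => ih (slabBddC_pd hf j)⟩

lemma SlabBddC.one_of_succ {m : ℕ} {f : ℝ → E n → ℝ} (hf : SlabBddC (m + 1) f) : SlabBddC 1 f :=
  ⟨hf.1, hf.2.1, fun j => (slabBddC_pd hf j).slabBdd⟩

lemma SlabBddC.exists_abs_le_const {m : ℕ} {f : E n → ℝ} (hf : SlabBddC m fun _ => f) :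
    ∃ C, ∀ x, |f x| ≤ C :=
  (hf.slabBdd.exists_abs_le 0).imp fun _ hC => hC 0 le_rfl

lemma SlabBddC.freeze {m : ℕ} {f : ℝ → E n → ℝ} (hf : SlabBddC m f) (t : ℝ) :
    SlabBddC m fun _ => f t := by
  have hbdd : ∀ {g : ℝ → E n → ℝ}, SlabBdd g → SlabBdd fun (_ : ℝ) => g t := fun {g} hg =>
    ⟨(hg.continuous_right t).comp continuous_snd, fun _ =>
      (hg.exists_abs_le t).imp fun _ hC _ _ x => hC t le_rfl x⟩
  induction m generalizing f with
  | zero => exact hbdd hf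
  | succ m ih => exact ⟨hbdd hf.1, fun _ => hf.2.1 t, fun j => ih (slabBddC_pd hf j)⟩

lemma SlabBddC.add {m : ℕ} {f g : ℝ → E n → ℝ} (hf : SlabBddC m f) (hg : SlabBddC m g) :
    SlabBddC m fun t x => f t x + g t x := by
  induction m generalizing f g with
  | zero => exact SlabBdd.add hf hg
  | succ m ih =>
    refine ⟨hf.1.add hg.1, fun t => (hf.2.1 t).add (hg.2.1 t), fun j => ?_⟩
    have hpd : (fun t => pd (fun x => f t x + g t x) j) =
        fun t x => pd (f t) j x + pd (g t) j x := by
      ext t x; exact pd_add (hf.2.1 t x) (hg.2.1 t x) j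
    rw [hpd]
    exact ih (slabBddC_pd hf j) (slabBddC_pd hg j)

lemma SlabBddC.mul {m : ℕ} {f g : ℝ → E n → ℝ} (hf : SlabBddC m f) (hg : SlabBddC m g) :
    SlabBddC m fun t x => f t x * g t x := by
  induction m generalizing f g with
  | zero => exact SlabBdd.mul hf hg
  | succ m ih =>
    refine ⟨hf.1.mul hg.1, fun t => (hf.2.1 t).mul (hg.2.1 t), fun j => ?_⟩
    have hpd : (fun t => pd (fun x => f t x * g t x) j) =
        fun t x => pd (f t) j x * g t x + f t x * pd (g t) j x := by
      ext t x; exact pd_mul (hf.2.1 t x) (hg.2.1 t x) j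
    rw [hpd]
    exact (ih (slabBddC_pd hf j) hg.of_succ).add (ih hf.of_succ (slabBddC_pd hg j))

lemma slabBddC_time {φ : ℝ → ℝ} (hφ : Continuous φ) (hb : ∀ T, ∃ C, ∀ t ≤ T, |φ t| ≤ C) (m : ℕ) :
    SlabBddC m fun t (_ : E n) => φ t := by
  have hbdd : ∀ {ψ : ℝ → ℝ}, Continuous ψ → (∀ T, ∃ C, ∀ t ≤ T, |ψ t| ≤ C) →
      SlabBdd fun t (_ : E n) => ψ t := fun {ψ} hψ hb =>
    ⟨hψ.comp continuous_fst, fun T => (hb T).imp fun C hC t ht _ => hC t ht⟩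
  induction m generalizing φ with
  | zero => exact hbdd hφ hb
  | succ m ih =>
    refine ⟨hbdd hφ hb, fun t => differentiable_const (φ t), fun j => ?_⟩
    simpa only [funext (pd_const _ j)] using
      ih (continuous_const (y := (0 : ℝ))) fun _ => ⟨|0|, fun _ _ => le_rfl⟩

lemma slabBddC_const (m : ℕ) (c : ℝ) : SlabBddC m fun (_ : ℝ) (_ : E n) => c :=
  slabBddC_time continuous_const (fun _ => ⟨|c|, fun _ _ => le_rfl⟩) m

lemma SlabBddC.sub {m : ℕ} {f g : ℝ → E n → ℝ} (hf : SlabBddC m f) (hg : SlabBddC m g) :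
    SlabBddC m fun t x => f t x - g t x := by
  simpa [sub_eq_add_neg] using hf.add ((slabBddC_const m (-1)).mul hg)

lemma SlabBddC.sum {m : ℕ} {ι : Type*} (s : Finset ι) {f : ι → ℝ → E n → ℝ}
    (hf : ∀ i, SlabBddC m (f i)) : SlabBddC m fun t x => ∑ i ∈ s, f i t x := by
  classical
  induction s using Finset.induction_on with
  | empty => simpa using slabBddC_const m 0
  | insert a s ha ih =>
    simp only [Finset.sum_insert ha]
    exact (hf a).add ih

lemma SlabBddC.comp {m : ℕ} {χ : ℝ → ℝ} (hχ : ContDiff ℝ (⊤ : ℕ∞) χ) {f : ℝ → E n → ℝ}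
    (hf : SlabBddC m f) : SlabBddC m fun t x => χ (f t x) := by
  induction m generalizing χ f with
  | zero => exact SlabBdd.comp hχ.continuous hf
  | succ m ih =>
    have hd : Differentiable ℝ χ := hχ.differentiable (by simp)
    refine ⟨hf.1.comp hχ.continuous, fun t => hd.comp (hf.2.1 t), fun j => ?_⟩
    have hpd : (fun t => pd (fun x => χ (f t x)) j) =
        fun t x => deriv χ (f t x) * pd (f t) j x := by
      ext t x; exact pd_comp hd (hf.2.1 t x) j
    rw [hpd]
    exact (ih (contDiff_infty_iff_deriv.1 hχ).2 hf.of_succ).mul (slabBddC_pd hf j)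

lemma slabBddC_of_norm_iteratedFDeriv_le {m : ℕ} {f : E n → ℝ} (hf : ContDiff ℝ (⊤ : ℕ∞) f)
    (hb : ∀ k, ∃ C, ∀ x, ‖iteratedFDeriv ℝ k f x‖ ≤ C) : SlabBddC m fun _ => f := by
  have hbdd : ∀ {g : E n → ℝ}, Continuous g → (∃ C, ∀ x, ‖iteratedFDeriv ℝ 0 g x‖ ≤ C) →
      SlabBdd fun (_ : ℝ) => g := fun {g} hg ⟨C, hC⟩ =>
    ⟨hg.comp continuous_snd, fun _ => ⟨C, fun _ _ x => by simpa using hC x⟩⟩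
  induction m generalizing f with
  | zero => exact hbdd hf.continuous (hb 0)
  | succ m ih =>
    exact ⟨hbdd hf.continuous (hb 0), fun _ => hf.differentiable (by simp),
      fun j => ih (contDiff_pd hf j) (exists_norm_iteratedFDeriv_pd_le hf hb j)⟩

end Regularity

section ShiftAverages

open MeasureTheory Topology

variable {n : ℕ} {Ω : Type*} [TopologicalSpace Ω] [MeasurableSpace Ω] [OpensMeasurableSpace Ω]

/-- Average over `ω` of the shifts of `f` to time `a t ω` and position `x + b t ω`. -/
def shiftAvg (μ : Measure Ω) (a : ℝ → Ω → ℝ) (b : ℝ → Ω → E n) (f : ℝ → E n → ℝ)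
    (t : ℝ) (x : E n) : ℝ :=
  ∫ ω, f (a t ω) (x + b t ω) ∂μ

/-- Continuous families of shifts `(t, x) ↦ (a t ω, x + b t ω)` that do not look into the future of
`max t 0`; averaging over such shifts preserves `SlabBddC m`. -/
structure CausalShift (a : ℝ → Ω → ℝ) (b : ℝ → Ω → E n) : Prop where
  continuous_time : Continuous fun p : ℝ × Ω => a p.1 p.2
  continuous_space : Continuous fun p : ℝ × Ω => b p.1 p.2
  time_le : ∀ t ω, a t ω ≤ max t 0

variable {μ : Measure Ω} [IsFiniteMeasure μ] {a : ℝ → Ω → ℝ} {b : ℝ → Ω → E n}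

lemma CausalShift.integrable (hab : CausalShift a b) {f : ℝ → E n → ℝ} (hf : SlabBdd f)
    (t : ℝ) (x : E n) : Integrable (fun ω => f (a t ω) (x + b t ω)) μ := by
  obtain ⟨C, hC⟩ := hf.exists_abs_le (max t 0)
  have ha : Continuous fun ω => a t ω := hab.continuous_time.comp (.prodMk_right t)
  have hb : Continuous fun ω => b t ω := hab.continuous_space.comp (.prodMk_right t)
  exact integrable_of_continuous_of_bounded
    (hf.continuous.comp (ha.prodMk (continuous_const.add hb))) fun ω => hC _ (hab.time_le t ω) _

lemma CausalShift.continuous_shiftAvg (hab : CausalShift a b) {f : ℝ → E n → ℝ}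
    (hf : SlabBdd f) : Continuous fun p : ℝ × E n => shiftAvg μ a b f p.1 p.2 := by
  refine continuous_iff_continuousAt.2 fun p₀ => ?_
  obtain ⟨C, hC⟩ := hf.exists_abs_le (max (p₀.1 + 1) 0)
  have hnear : ∀ᶠ p : ℝ × E n in 𝓝 p₀, p.1 < p₀.1 + 1 :=
    (continuous_fst.tendsto p₀).eventually_lt_const (by linarith)
  refine continuousAt_of_dominated (bound := fun _ => C)
    (.of_forall fun p => (hab.integrable hf p.1 p.2).1) ?_
    (integrable_const C) (.of_forall fun ω => ?_)
  · filter_upwards [hnear] with p hp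
    exact .of_forall fun ω => hC _ ((hab.time_le _ _).trans (max_le_max hp.le le_rfl)) _
  · have ha : Continuous fun p : ℝ × E n => a p.1 ω :=
      hab.continuous_time.comp (continuous_fst.prodMk continuous_const)
    have hb : Continuous fun p : ℝ × E n => b p.1 ω :=
      hab.continuous_space.comp (continuous_fst.prodMk continuous_const)
    exact (hf.continuous.comp (ha.prodMk (continuous_snd.add hb))).continuousAt

lemma CausalShift.slabBdd_shiftAvg (hab : CausalShift a b) {f : ℝ → E n → ℝ} (hf : SlabBdd f) :
    SlabBdd (shiftAvg μ a b f) := by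
  refine ⟨hab.continuous_shiftAvg hf, fun T => ?_⟩
  obtain ⟨C, hC⟩ := hf.exists_abs_le (max T 0)
  refine ⟨C * μ.real univ, fun t ht x => ?_⟩
  rw [shiftAvg, ← Real.norm_eq_abs]
  exact norm_integral_le_of_norm_le_const
    (.of_forall fun ω => hC _ ((hab.time_le t ω).trans (max_le_max ht le_rfl)) _)

lemma CausalShift.hasFDerivAt_shiftAvg (hab : CausalShift a b) {f : ℝ → E n → ℝ}
    (hf : SlabBddC 1 f) (t : ℝ) (x : E n) :
    HasFDerivAt (shiftAvg μ a b f t) (∑ j, shiftAvg μ a b (fun s => pd (f s) j) t x •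
      (EuclideanSpace.proj j : E n →L[ℝ] ℝ)) x := by
  have hint := fun j => hab.integrable (μ := μ) (slabBddC_pd hf j).slabBdd t x
  choose C hC using fun j => (slabBddC_pd hf j).exists_abs_le (max t 0)
  have key := hasFDerivAt_integral_of_dominated_of_fderiv_le (𝕜 := ℝ) (μ := μ) (s := univ)
    (x₀ := x) (F := fun x ω => f (a t ω) (x + b t ω))
    (F' := fun x ω => ∑ j, pd (f (a t ω)) j (x + b t ω) •
      (EuclideanSpace.proj j : E n →L[ℝ] ℝ)) (bound := fun _ => ∑ j, C j) univ_mem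
    (.of_forall fun x => (hab.integrable hf.1 t x).1) (hab.integrable hf.1 t x)
    (Finset.aestronglyMeasurable_fun_sum _ fun j _ => ((hint j).smul_const _).1)
    (.of_forall fun ω y _ => (norm_sum_smul_proj_le _).trans
      (Finset.sum_le_sum fun j _ => hC j _ (hab.time_le t ω) _))
    (integrable_const _) (.of_forall fun ω y _ => ?_)
  · rw [integral_finsetSum _ fun j _ => (hint j).smul_const _] at key
    simp only [integral_smul_const] at key
    exact key
  · have hshift := (hf.differentiable (a t ω) (y + b t ω)).hasFDerivAt
    rw [fderiv_eq_sum_pd] at hshift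
    exact hshift.comp y ((hasFDerivAt_id y).add_const (b t ω))

lemma CausalShift.pd_shiftAvg (hab : CausalShift a b) {f : ℝ → E n → ℝ} (hf : SlabBddC 1 f)
    (t : ℝ) (j : Fin n) (x : E n) :
    pd (shiftAvg μ a b f t) j x = shiftAvg μ a b (fun s => pd (f s) j) t x :=
  pd_eq_of_hasFDerivAt (hab.hasFDerivAt_shiftAvg hf t x) j

lemma CausalShift.slabBddC_shiftAvg (hab : CausalShift a b) {m : ℕ} {f : ℝ → E n → ℝ}
    (hf : SlabBddC m f) : SlabBddC m (shiftAvg μ a b f) := by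
  induction m generalizing f with
  | zero => exact hab.slabBdd_shiftAvg hf
  | succ m ih =>
    have hpd : ∀ j, (fun t => pd (shiftAvg μ a b f t) j) =
        shiftAvg μ a b fun s => pd (f s) j := fun j => by
      ext t x; exact hab.pd_shiftAvg hf.one_of_succ t j x
    refine ⟨hab.slabBdd_shiftAvg hf.1, fun t x =>
      (hab.hasFDerivAt_shiftAvg hf.one_of_succ t x).differentiableAt, fun j => ?_⟩
    rw [hpd]
    exact ih (slabBddC_pd hf j)

end ShiftAverages

section HeatFlow

open MeasureTheory ProbabilityTheory

variable {n : ℕ}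

/-- The heat semigroup `e^{r ν Δ}`, written as a Gaussian average. Since `√` vanishes on negative
numbers it is the identity for `r ≤ 0`. -/
def heatFlow (ν r : ℝ) (f : E n → ℝ) (x : E n) : ℝ :=
  ∫ z, f (x + √(2 * ν * r) • z) ∂stdGaussian (E n)

lemma causalShift_heatFlow (n : ℕ) (ν : ℝ) :
    CausalShift (fun t (_ : E n) => t) fun t z => √(2 * ν * t) • z where
  continuous_time := by fun_prop
  continuous_space := by fun_prop
  time_le t _ := le_max_left t 0

lemma slabBddC_heatFlow (ν : ℝ) {m : ℕ} {f : E n → ℝ} (hf : SlabBddC m fun _ => f) :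
    SlabBddC m fun t => heatFlow ν t f :=
  (causalShift_heatFlow n ν).slabBddC_shiftAvg (μ := stdGaussian (E n)) hf

lemma pd_heatFlow (ν : ℝ) {f : E n → ℝ} (hf : SlabBddC 1 fun _ => f) (t : ℝ) (j : Fin n)
    (x : E n) : pd (heatFlow ν t f) j x = heatFlow ν t (pd f j) x :=
  (causalShift_heatFlow n ν).pd_shiftAvg (μ := stdGaussian (E n)) hf t j x

lemma abs_heatFlow_le (ν r : ℝ) {f : E n → ℝ} {C : ℝ} (hC : ∀ x, |f x| ≤ C) (x : E n) :
    |heatFlow ν r f x| ≤ C := by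
  have hbound : ∀ z, ‖f (x + √(2 * ν * r) • z)‖ ≤ C := fun z => hC _
  simpa [heatFlow] using
    norm_integral_le_of_norm_le_const (μ := stdGaussian (E n)) (.of_forall hbound)

lemma heatFlow_of_nonpos {ν r : ℝ} (hν : 0 ≤ ν) (hr : r ≤ 0) (f : E n → ℝ) (x : E n) :
    heatFlow ν r f x = f x := by
  have hsqrt : √(2 * ν * r) = 0 := Real.sqrt_eq_zero_of_nonpos (by nlinarith)
  simp [heatFlow, hsqrt]

lemma heatFlow_max_zero {ν : ℝ} (hν : 0 ≤ ν) (r : ℝ) (f : E n → ℝ) (x : E n) :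
    heatFlow ν (max r 0) f x = heatFlow ν r f x := by
  rcases le_total r 0 with hr | hr
  · rw [max_eq_right hr, heatFlow_of_nonpos hν hr, heatFlow_of_nonpos hν le_rfl]
  · rw [max_eq_left hr]

/-- The first absolute moment of the standard Gaussian. -/
def gaussMoment (n : ℕ) : ℝ := ∫ z : E n, ‖z‖ ∂stdGaussian (E n)

lemma gaussMoment_nonneg (n : ℕ) : 0 ≤ gaussMoment n := integral_nonneg fun _ => norm_nonneg _

lemma integral_coord_mul_comp_add_smul {f : E n → ℝ} (hf : SlabBddC 1 fun _ => f) (j : Fin n)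
    (σ : ℝ) (x : E n) :
    ∫ z, z j * f (x + σ • z) ∂stdGaussian (E n) =
      σ * ∫ z, pd f j (x + σ • z) ∂stdGaussian (E n) := by
  have hd : Differentiable ℝ f := hf.differentiable 0
  obtain ⟨C, hC⟩ := hf.exists_abs_le_const
  obtain ⟨C', hC'⟩ := (slabBddC_pd hf j).exists_abs_le_const
  have hc : Continuous (pd f j) := (slabBddC_pd hf j).slabBdd.continuous_right 0
  have hpd : pd (fun z => f (x + σ • z)) j = fun z => σ * pd f j (x + σ • z) :=
    funext fun z => pd_comp_add_smul hd x z σ j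
  have hbound : ∀ z, |pd (fun z => f (x + σ • z)) j z| ≤ |σ| * C' := fun z => by
    rw [hpd, abs_mul]
    exact mul_le_mul_of_nonneg_left (hC' _) (abs_nonneg _)
  rw [← integral_pd_stdGaussian (g := fun z => f (x + σ • z)) (hd.comp (by fun_prop)) j
    (by rw [hpd]; fun_prop) (fun z => hC _) hbound, hpd, integral_const_mul]

lemma abs_heatFlow_pd_le {ν r : ℝ} (hν : 0 < ν) (hr : 0 < r) {f : E n → ℝ}
    (hf : SlabBddC 1 fun _ => f) {C : ℝ} (hC : ∀ x, |f x| ≤ C) (j : Fin n) (x : E n) :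
    |heatFlow ν r (pd f j) x| ≤ gaussMoment n / √(2 * ν * r) * C := by
  have hσ : 0 < √(2 * ν * r) := Real.sqrt_pos.2 (by positivity)
  have hmoment : |∫ z, z j * f (x + √(2 * ν * r) • z) ∂stdGaussian (E n)| ≤ gaussMoment n * C := by
    rw [gaussMoment, ← integral_mul_const, ← Real.norm_eq_abs]
    refine norm_integral_le_of_norm_le (integrable_norm_stdGaussian.mul_const C)
      (.of_forall fun z => ?_)
    rw [Real.norm_eq_abs, abs_mul]
    exact mul_le_mul (abs_coord_le_norm z j) (hC _) (abs_nonneg _) (norm_nonneg _)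
  rw [integral_coord_mul_comp_add_smul hf, abs_mul, abs_of_pos hσ] at hmoment
  rw [div_mul_eq_mul_div, le_div_iff₀ hσ, mul_comm]
  exact hmoment

lemma hasDerivAt_sqrt_two_mul_mul {ν s : ℝ} (hν : 0 < ν) (hs : 0 < s) :
    HasDerivAt (fun s => √(2 * ν * s)) (ν / √(2 * ν * s)) s := by
  have hne : 2 * ν * s ≠ 0 := by positivity
  refine (((hasDerivAt_id s).const_mul (2 * ν)).sqrt hne).congr_deriv ?_
  simp only [id_eq, mul_one]
  field_simp

lemma hasDerivAt_comp_add_sqrt_smul {ν s : ℝ} (hν : 0 < ν) (hs : 0 < s) {f : E n → ℝ}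
    (hf : Differentiable ℝ f) (x z : E n) :
    HasDerivAt (fun s => f (x + √(2 * ν * s) • z))
      (ν / √(2 * ν * s) * ∑ j, z j * pd f j (x + √(2 * ν * s) • z)) s := by
  have hpath : HasDerivAt (fun s => x + √(2 * ν * s) • z) ((ν / √(2 * ν * s)) • z) s :=
    ((hasDerivAt_sqrt_two_mul_mul hν hs).smul_const z).const_add x
  have hcomp := (hf (x + √(2 * ν * s) • z)).hasFDerivAt.comp_hasDerivAt s hpath
  rw [fderiv_eq_sum_pd] at hcomp
  refine hcomp.congr_deriv ?_
  rw [map_smul, smul_eq_mul, sum_apply]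
  simp [mul_comm]

lemma abs_sum_coord_mul_le {p D : Fin n → ℝ} (hp : ∀ j, |p j| ≤ D j) (z : E n) :
    |∑ j, z j * p j| ≤ ‖z‖ * ∑ j, D j := by
  rw [Finset.mul_sum]
  refine (Finset.abs_sum_le_sum_abs _ _).trans (Finset.sum_le_sum fun j _ => ?_)
  rw [abs_mul]
  exact mul_le_mul (abs_coord_le_norm z j) (hp j) (abs_nonneg _) (norm_nonneg _)

lemma hasDerivAt_heatFlow_integral {ν t : ℝ} (hν : 0 < ν) (ht : 0 < t) {f : E n → ℝ}
    (hf : SlabBddC 1 fun _ => f) (x : E n) :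
    HasDerivAt (fun s => heatFlow ν s f x)
      (∫ z, ν / √(2 * ν * t) * ∑ j, z j * pd f j (x + √(2 * ν * t) • z) ∂stdGaussian (E n)) t := by
  have hd : Differentiable ℝ f := hf.differentiable 0
  have hc : ∀ j, Continuous (pd f j) := fun j => (slabBddC_pd hf j).slabBdd.continuous_right 0
  obtain ⟨C, hC⟩ := hf.exists_abs_le_const
  choose D hD using fun j => (slabBddC_pd hf j).exists_abs_le_const
  refine (hasDerivAt_integral_of_dominated_loc_of_deriv_le (s := Ioi (t / 2))
    (F := fun s z => f (x + √(2 * ν * s) • z))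
    (bound := fun z => ν / √(2 * ν * (t / 2)) * (‖z‖ * ∑ j, D j)) (Ioi_mem_nhds (by linarith))
    (.of_forall fun s => (hd.continuous.comp (by fun_prop)).aestronglyMeasurable)
    (integrable_of_continuous_of_bounded (hd.continuous.comp (by fun_prop)) fun z => hC _)
    (by fun_prop) (.of_forall fun z s (hs : t / 2 < s) => ?_)
    ((integrable_norm_stdGaussian.mul_const _).const_mul _)
    (.of_forall fun z s (hs : t / 2 < s) =>
      hasDerivAt_comp_add_sqrt_smul hν (lt_trans (by positivity) hs) hd x z)).2
  have : 0 < √(2 * ν * (t / 2)) := Real.sqrt_pos.2 (by positivity)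
  rw [norm_mul, Real.norm_of_nonneg (by positivity), Real.norm_eq_abs]
  gcongr
  exact abs_sum_coord_mul_le (fun j => hD j _) z

lemma hasDerivAt_heatFlow {ν t : ℝ} (hν : 0 < ν) (ht : 0 < t) {f : E n → ℝ}
    (hf : SlabBddC 2 fun _ => f) (x : E n) :
    HasDerivAt (fun s => heatFlow ν s f x) (ν * ∑ j, heatFlow ν t (pd (pd f j) j) x) t := by
  have : √(2 * ν * t) ≠ 0 := (Real.sqrt_pos.2 (by positivity)).ne'
  have hint : ∀ j, Integrable (fun z : E n => z j * pd f j (x + √(2 * ν * t) • z))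
      (stdGaussian (E n)) := fun j => by
    obtain ⟨D, hD⟩ := (slabBddC_pd hf j).exists_abs_le_const
    have hc : Continuous (pd f j) := (slabBddC_pd hf j).slabBdd.continuous_right 0
    exact integrable_coord_mul_stdGaussian (g := fun z => pd f j (x + √(2 * ν * t) • z))
      (by fun_prop) (fun z => hD _) j
  refine (hasDerivAt_heatFlow_integral hν ht hf.of_succ x).congr_deriv ?_
  rw [integral_const_mul, integral_finsetSum _ fun j _ => hint j, Finset.mul_sum, Finset.mul_sum]
  refine Finset.sum_congr rfl fun j _ => ?_
  rw [integral_coord_mul_comp_add_smul (slabBddC_pd hf j), heatFlow]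
  field_simp

lemma abs_heatFlow_sub_heatFlow_le {ν : ℝ} (hν : 0 < ν) {f : E n → ℝ}
    (hf : SlabBddC 2 fun _ => f) {C : ℝ} (hC0 : 0 ≤ C) (hC : ∀ j x, |pd (pd f j) j x| ≤ C)
    (x : E n) (r₁ r₂ : ℝ) :
    |heatFlow ν r₁ f x - heatFlow ν r₂ f x| ≤ ν * (n * C) * |r₁ - r₂| := by
  wlog hle : r₁ ≤ r₂ generalizing r₁ r₂
  · rw [abs_sub_comm, abs_sub_comm r₁]
    exact this r₂ r₁ (le_of_not_ge hle)
  have hcont : Continuous fun r => heatFlow ν r f x :=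
    (slabBddC_heatFlow ν hf).slabBdd.continuous_left x
  rw [← heatFlow_max_zero hν.le r₁, ← heatFlow_max_zero hν.le r₂]
  rcases (max_le_max_right 0 hle).eq_or_lt with heq | hlt
  · rw [heq, sub_self, abs_zero]
    positivity
  obtain ⟨c, -, hslope⟩ := exists_hasDerivAt_eq_slope (fun r => heatFlow ν r f x)
    (fun r => ν * ∑ j, heatFlow ν r (pd (pd f j) j) x) hlt hcont.continuousOn
    fun r hr => hasDerivAt_heatFlow hν ((le_max_right r₁ 0).trans_lt hr.1) hf x
  rw [eq_div_iff (sub_pos.2 hlt).ne'] at hslope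
  have hsum : |∑ j, heatFlow ν c (pd (pd f j) j) x| ≤ n * C := by
    refine (Finset.abs_sum_le_sum_abs _ _).trans ?_
    exact (Finset.sum_le_sum fun j _ => abs_heatFlow_le ν c (hC j) x).trans (by simp)
  rw [abs_sub_comm, ← hslope, abs_mul, abs_mul, abs_of_pos hν, abs_sub_comm r₁]
  exact mul_le_mul (mul_le_mul_of_nonneg_left hsum hν.le) (abs_max_sub_max_le_abs r₂ r₁ 0)
    (abs_nonneg _) (by positivity)

end HeatFlow

section Duhamel

open MeasureTheory ProbabilityTheory

variable {n : ℕ}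

/-- The Duhamel integral `∫₀ᵗ e^{(t - s) ν Δ} F(s) ds`, extended by zero to negative times. -/
def duhamel (ν : ℝ) (F : ℝ → E n → ℝ) (t : ℝ) (x : E n) : ℝ :=
  ∫ s in (0 : ℝ)..max t 0, heatFlow ν (max t 0 - s) (F s) x

/-- The substitution `s = t (1 - η)` turns `duhamel` into `t` times an average over
`(η, z) ∈ (0, 1] × ℝⁿ` with respect to this measure. -/
def duhamelMeasure (n : ℕ) : Measure (ℝ × E n) :=
  (volume.restrict (Ioc (0 : ℝ) 1)).prod (stdGaussian (E n))

instance : IsFiniteMeasure (duhamelMeasure n) := by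
  unfold duhamelMeasure; infer_instance

/-- The time at which the source is evaluated in the averaged form of `duhamel`. -/
def duhamelTime (t : ℝ) (ω : ℝ × E n) : ℝ := max t 0 - max t 0 * max ω.1 0

/-- The spatial shift of the source in the averaged form of `duhamel`. -/
def duhamelShift (ν t : ℝ) (ω : ℝ × E n) : E n := √(2 * ν * (max t 0 * max ω.1 0)) • ω.2

lemma causalShift_duhamel (n : ℕ) (ν : ℝ) :
    CausalShift (Ω := ℝ × E n) duhamelTime (duhamelShift ν) where
  continuous_time := by unfold duhamelTime; fun_prop
  continuous_space := by unfold duhamelShift; fun_prop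
  time_le t ω := sub_le_self _ (mul_nonneg (le_max_right t 0) (le_max_right ω.1 0))

lemma duhamel_eq_shiftAvg (ν : ℝ) {F : ℝ → E n → ℝ} (hF : SlabBdd F) (t : ℝ) (x : E n) :
    duhamel ν F t x =
      max t 0 * shiftAvg (duhamelMeasure n) duhamelTime (duhamelShift ν) F t x := by
  have hshift := (causalShift_duhamel n ν).integrable (μ := duhamelMeasure n) hF t x
  have hsubst := intervalIntegral.mul_integral_comp_sub_mul (a := 0) (b := 1)
    (f := fun s => heatFlow ν (max t 0 - s) (F s) x) (max t 0) (max t 0)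
  simp only [mul_one, mul_zero, sub_self, sub_zero] at hsubst
  rw [shiftAvg, duhamelMeasure, integral_prod _ hshift,
    ← intervalIntegral.integral_of_le zero_le_one, duhamel, ← hsubst]
  congr 1
  refine intervalIntegral.integral_congr fun η hη => ?_
  rw [uIcc_of_le zero_le_one] at hη
  simp only [heatFlow, duhamelTime, duhamelShift, max_eq_left hη.1, sub_sub_cancel]

lemma slabBddC_duhamel (ν : ℝ) {m : ℕ} {F : ℝ → E n → ℝ} (hF : SlabBddC m F) :
    SlabBddC m (duhamel ν F) := by
  have havg : duhamel ν F = fun t x => max t 0 *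
      shiftAvg (duhamelMeasure n) duhamelTime (duhamelShift ν) F t x := by
    ext t x; exact duhamel_eq_shiftAvg ν hF.slabBdd t x
  have htime : SlabBddC m fun t (_ : E n) => max t 0 :=
    slabBddC_time (by fun_prop) (fun T => ⟨max T 0, fun t ht => by
      rw [abs_of_nonneg (le_max_right t 0)]; exact max_le_max_right 0 ht⟩) m
  rw [havg]
  exact htime.mul ((causalShift_duhamel n ν).slabBddC_shiftAvg hF)

lemma pd_duhamel (ν : ℝ) {F : ℝ → E n → ℝ} (hF : SlabBddC 1 F) (t : ℝ) (j : Fin n) (x : E n) :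
    pd (duhamel ν F t) j x = duhamel ν (fun s => pd (F s) j) t x := by
  have havg : duhamel ν F t = fun x => max t 0 *
      shiftAvg (duhamelMeasure n) duhamelTime (duhamelShift ν) F t x := by
    ext x; exact duhamel_eq_shiftAvg ν hF.slabBdd t x
  have hab := causalShift_duhamel n ν
  rw [havg, pd_const_mul ((hab.slabBddC_shiftAvg hF).differentiable t x),
    hab.pd_shiftAvg hF, duhamel_eq_shiftAvg ν (slabBddC_pd hF j).slabBdd]

end Duhamel

section DuhamelEquation

open MeasureTheory ProbabilityTheory

variable {n : ℕ} {ν : ℝ}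

lemma SlabBdd.continuous_heatFlow_sub {F : ℝ → E n → ℝ} (hF : SlabBdd F) (ν t : ℝ) (x : E n) :
    Continuous fun s => heatFlow ν (t - s) (F s) x :=
  have hshift : CausalShift (fun s (_ : E n) => s) fun s z => √(2 * ν * (t - s)) • z :=
    ⟨by fun_prop, by fun_prop, fun s _ => le_max_left s 0⟩
  (hshift.slabBdd_shiftAvg (μ := stdGaussian (E n)) hF).continuous_left x

lemma duhamel_of_nonpos {t : ℝ} (ht : t ≤ 0) (F : ℝ → E n → ℝ) (x : E n) :
    duhamel ν F t x = 0 := by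
  simp [duhamel, max_eq_right ht]

lemma duhamel_sub {F G : ℝ → E n → ℝ} (hF : SlabBdd F) (hG : SlabBdd G) (t : ℝ) (x : E n) :
    duhamel ν (fun s y => F s y - G s y) t x = duhamel ν F t x - duhamel ν G t x := by
  have hint : ∀ {H : ℝ → E n → ℝ}, SlabBdd H → ∀ s,
      Integrable (fun z => H s (x + √(2 * ν * (max t 0 - s)) • z)) (stdGaussian (E n)) :=
    fun {H} hH s => by
      obtain ⟨C, hC⟩ := hH.exists_abs_le s
      exact integrable_of_continuous_of_bounded ((hH.continuous_right s).comp (by fun_prop))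
        fun z => hC s le_rfl _
  rw [duhamel, duhamel, duhamel, ← intervalIntegral.integral_sub
    ((hF.continuous_heatFlow_sub ν _ x).intervalIntegrable _ _)
    ((hG.continuous_heatFlow_sub ν _ x).intervalIntegrable _ _)]
  exact intervalIntegral.integral_congr fun s _ => integral_sub (hint hF s) (hint hG s)

lemma duhamel_eq_sub {t T : ℝ} (hν : 0 ≤ ν) (ht : 0 ≤ t) (htT : t ≤ T) {F : ℝ → E n → ℝ}
    (hF : SlabBdd F) (x : E n) :
    duhamel ν F t x =
      (∫ s in (0 : ℝ)..T, heatFlow ν (t - s) (F s) x) - ∫ s in t..T, F s x := by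
  have hfuture : ∫ s in t..T, heatFlow ν (t - s) (F s) x = ∫ s in t..T, F s x := by
    refine intervalIntegral.integral_congr fun s hs => ?_
    rw [uIcc_of_le htT] at hs
    exact heatFlow_of_nonpos hν (sub_nonpos.2 hs.1) (F s) x
  have hcont := hF.continuous_heatFlow_sub ν t x
  rw [← hfuture, ← intervalIntegral.integral_add_adjacent_intervals
    (hcont.intervalIntegrable 0 t) (hcont.intervalIntegrable t T), add_sub_cancel_right, duhamel,
    max_eq_left ht]

lemma hasDerivAt_heatFlow_sub_of_ne {s t : ℝ} (hν : 0 < ν) (hst : s ≠ t) {F : ℝ → E n → ℝ}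
    (hF : SlabBddC 2 F) (x : E n) :
    HasDerivAt (fun t => heatFlow ν (t - s) (F s) x) (indicator {s | s ≤ t}
      (fun s => ν * ∑ j, heatFlow ν (t - s) (pd (pd (F s) j) j) x) s) t := by
  rcases hst.lt_or_gt with hlt | hgt
  · rw [indicator_of_mem (show s ∈ {s | s ≤ t} from hlt.le)]
    exact (hasDerivAt_heatFlow hν (sub_pos.2 hlt) (hF.freeze s) x).comp_sub_const t s
  · rw [indicator_of_notMem (show s ∉ {s | s ≤ t} from not_le.2 hgt)]
    refine (hasDerivAt_const t (F s x)).congr_of_eventuallyEq ?_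
    filter_upwards [gt_mem_nhds hgt] with r hr
    exact heatFlow_of_nonpos hν.le (sub_nonpos.2 (le_of_lt hr)) (F s) x

lemma lipschitzOnWith_heatFlow_sub (hν : 0 < ν) {s D : ℝ} {F : ℝ → E n → ℝ} (hF : SlabBddC 2 F)
    (hD0 : 0 ≤ D) (hD : ∀ j x, |pd (pd (F s) j) j x| ≤ D) (x : E n) :
    LipschitzOnWith (Real.nnabs (ν * (n * D))) (fun t => heatFlow ν (t - s) (F s) x) univ := by
  refine LipschitzOnWith.of_dist_le_mul fun r₁ _ r₂ _ => ?_
  have hC : 0 ≤ ν * (n * D) := by positivity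
  rw [Real.coe_nnabs, abs_of_nonneg hC, Real.dist_eq, Real.dist_eq]
  simpa using abs_heatFlow_sub_heatFlow_le hν (hF.freeze s) hD0 hD x (r₁ - s) (r₂ - s)

lemma hasDerivAt_integral_heatFlow_sub {t T : ℝ} (hν : 0 < ν) (ht : 0 < t) (htT : t < T)
    {F : ℝ → E n → ℝ} (hF : SlabBddC 2 F) (x : E n) :
    HasDerivAt (fun t => ∫ s in (0 : ℝ)..T, heatFlow ν (t - s) (F s) x)
      (ν * ∑ j, duhamel ν (fun s => pd (pd (F s) j) j) t x) t := by
  have hpd : ∀ j, SlabBdd fun s => pd (pd (F s) j) j := fun j =>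
    (slabBddC_pd (slabBddC_pd hF j) j).slabBdd
  have hcont := fun t' => hF.slabBdd.continuous_heatFlow_sub ν t' x
  have hcont' : Continuous fun s => ν * ∑ j, heatFlow ν (t - s) (pd (pd (F s) j) j) x :=
    continuous_const.mul (continuous_finsetSum _ fun j _ => (hpd j).continuous_heatFlow_sub ν t x)
  choose D hD using fun j => (hpd j).exists_abs_le T
  have hD0 : ∀ j, 0 ≤ D j := fun j => (abs_nonneg _).trans (hD j T le_rfl 0)
  have key := (intervalIntegral.hasDerivAt_integral_of_dominated_loc_of_lip (𝕜 := ℝ)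
    (μ := volume) (a := 0) (b := T) (s := univ) (bound := fun _ => ν * (n * ∑ j, D j))
    (F := fun t s => heatFlow ν (t - s) (F s) x)
    (F' := indicator {s | s ≤ t} fun s => ν * ∑ j, heatFlow ν (t - s) (pd (pd (F s) j) j) x)
    univ_mem (.of_forall fun t' => (hcont t').aestronglyMeasurable)
    ((hcont t).intervalIntegrable _ _)
    (hcont'.aestronglyMeasurable.indicator measurableSet_Iic) (.of_forall fun s hs => ?_)
    (by simp) ?_).2
  · rw [intervalIntegral.integral_indicator ⟨ht.le, htT.le⟩, intervalIntegral.integral_const_mul,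
      intervalIntegral.integral_finsetSum
        fun j _ => ((hpd j).continuous_heatFlow_sub ν t x).intervalIntegrable _ _] at key
    simpa only [duhamel, max_eq_left ht.le] using key
  · rw [uIoc_of_le (ht.trans htT).le] at hs
    exact lipschitzOnWith_heatFlow_sub hν hF (Finset.sum_nonneg fun j _ => hD0 j) (fun j y =>
      (hD j s hs.2 y).trans (Finset.single_le_sum (fun k _ => hD0 k) (Finset.mem_univ j))) x
  · filter_upwards [compl_mem_ae_iff.2 (measure_singleton (μ := volume) t)] with s hs _
    exact hasDerivAt_heatFlow_sub_of_ne hν hs hF x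

lemma hasDerivAt_duhamel {t : ℝ} (hν : 0 < ν) (ht : 0 < t) {F : ℝ → E n → ℝ}
    (hF : SlabBddC 2 F) (x : E n) :
    HasDerivAt (fun t => duhamel ν F t x)
      (F t x + ν * ∑ j, duhamel ν (fun s => pd (pd (F s) j) j) t x) t := by
  have hFc : Continuous fun s => F s x := hF.slabBdd.continuous_left x
  have hright : HasDerivAt (fun r => ∫ s in r..(t + 1), F s x) (-F t x) t :=
    intervalIntegral.integral_hasDerivAt_left (hFc.intervalIntegrable _ _)
      (hFc.stronglyMeasurableAtFilter _ _) hFc.continuousAt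
  have key := (hasDerivAt_integral_heatFlow_sub hν ht (lt_add_one t) hF x).sub hright
  refine (key.congr_deriv (by ring)).congr_of_eventuallyEq ?_
  filter_upwards [lt_mem_nhds ht, gt_mem_nhds (lt_add_one t)] with r hr0 hr
  exact duhamel_eq_sub hν.le hr0.le hr.le hF.slabBdd x

end DuhamelEquation

section WeightedBounds

variable {n : ℕ} {T lam mu A B : ℝ} {f g : ℝ → E n → ℝ}

/-- Boundedness on the slab `(-∞, T] × ℝⁿ` in the supremum norm with weight `e^{-lam t}` for
`t ≥ 0`. -/
def ExpBdd (T lam B : ℝ) (f : ℝ → E n → ℝ) : Prop :=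
  ∀ t ≤ T, ∀ x, |f t x| ≤ B * Real.exp (lam * max t 0)

/-- `ExpBdd` for all iterated spatial partial derivatives of order at most `m`. -/
def ExpBddC : ℕ → ℝ → ℝ → ℝ → (ℝ → E n → ℝ) → Prop
  | 0, T, lam, B, f => ExpBdd T lam B f
  | m + 1, T, lam, B, f => ExpBdd T lam B f ∧ ∀ j, ExpBddC m T lam B fun t => pd (f t) j

lemma expBdd_zero_iff : ExpBdd T 0 B f ↔ ∀ t ≤ T, ∀ x, |f t x| ≤ B := by
  simp [ExpBdd]

lemma ExpBdd.nonneg (hf : ExpBdd T lam B f) : 0 ≤ B := by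
  simpa using (abs_nonneg _).trans (hf (min T 0) (min_le_left T 0) 0)

lemma ExpBdd.mono (hAB : A ≤ B) (hf : ExpBdd T lam A f) : ExpBdd T lam B f :=
  fun t ht x => (hf t ht x).trans (by gcongr)

lemma ExpBdd.mono_weight (hlam : lam ≤ mu) (hf : ExpBdd T lam B f) : ExpBdd T mu B f := by
  have hB := hf.nonneg
  exact fun t ht x => (hf t ht x).trans (by gcongr)

lemma ExpBdd.zero_weight (hlam : 0 ≤ lam) (hf : ExpBdd T lam B f) :
    ExpBdd T 0 (B * Real.exp (lam * max T 0)) f := by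
  have hB := hf.nonneg
  exact expBdd_zero_iff.2 fun t ht x => (hf t ht x).trans (by gcongr)

lemma ExpBdd.add (hf : ExpBdd T lam A f) (hg : ExpBdd T lam B g) :
    ExpBdd T lam (A + B) fun t x => f t x + g t x := fun t ht x => by
  rw [add_mul]
  exact (abs_add_le _ _).trans (add_le_add (hf t ht x) (hg t ht x))

lemma ExpBdd.mul (hf : ExpBdd T lam A f) (hg : ExpBdd T mu B g) :
    ExpBdd T (lam + mu) (A * B) fun t x => f t x * g t x := fun t ht x => by
  rw [abs_mul, add_mul, Real.exp_add, mul_mul_mul_comm]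
  exact mul_le_mul (hf t ht x) (hg t ht x) (abs_nonneg _)
    (mul_nonneg hf.nonneg (Real.exp_pos _).le)

lemma ExpBdd.sum {F : Fin n → ℝ → E n → ℝ} (hF : ∀ j, ExpBdd T lam B (F j)) :
    ExpBdd T lam (n * B) fun t x => ∑ j, F j t x := fun t ht x =>
  (Finset.abs_sum_le_sum_abs _ _).trans
    ((Finset.sum_le_sum fun j _ => hF j t ht x).trans (by simp [mul_assoc]))

lemma ExpBddC.expBdd {m : ℕ} (hf : ExpBddC m T lam B f) : ExpBdd T lam B f := by
  cases m with
  | zero => exact hf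
  | succ m => exact hf.1

lemma expBddC_pd {m : ℕ} (hf : ExpBddC (m + 1) T lam B f) (j : Fin n) :
    ExpBddC m T lam B fun t => pd (f t) j :=
  hf.2 j

lemma ExpBddC.of_succ {m : ℕ} (hf : ExpBddC (m + 1) T lam B f) : ExpBddC m T lam B f := by
  induction m generalizing f with
  | zero => exact hf.1
  | succ m ih => exact ⟨hf.1, fun j => ih (expBddC_pd hf j)⟩

lemma ExpBddC.of_forall {m : ℕ} (hbdd : ∀ {f : ℝ → E n → ℝ}, ExpBdd T lam A f → ExpBdd T mu B f)
    (hf : ExpBddC m T lam A f) : ExpBddC m T mu B f := by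
  induction m generalizing f with
  | zero => exact hbdd hf
  | succ m ih => exact ⟨hbdd hf.1, fun j => ih (expBddC_pd hf j)⟩

lemma ExpBddC.mono {m : ℕ} (hAB : A ≤ B) (hf : ExpBddC m T lam A f) : ExpBddC m T lam B f :=
  hf.of_forall fun h => h.mono hAB

lemma ExpBddC.add {m : ℕ} (hfs : SlabBddC m f) (hgs : SlabBddC m g) (hf : ExpBddC m T lam A f)
    (hg : ExpBddC m T lam B g) : ExpBddC m T lam (A + B) fun t x => f t x + g t x := by
  induction m generalizing f g with
  | zero => exact ExpBdd.add hf hg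
  | succ m ih =>
    refine ⟨hf.1.add hg.1, fun j => ?_⟩
    have hpd : (fun t => pd (fun x => f t x + g t x) j) =
        fun t x => pd (f t) j x + pd (g t) j x := by
      ext t x; exact pd_add (hfs.differentiable t x) (hgs.differentiable t x) j
    rw [hpd]
    exact ih (slabBddC_pd hfs j) (slabBddC_pd hgs j) (expBddC_pd hf j) (expBddC_pd hg j)

lemma ExpBddC.sum {m : ℕ} {F : Fin n → ℝ → E n → ℝ} (hFs : ∀ j, SlabBddC m (F j))
    (hF : ∀ j, ExpBddC m T lam B (F j)) : ExpBddC m T lam (n * B) fun t x => ∑ j, F j t x := by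
  induction m generalizing F with
  | zero => exact ExpBdd.sum hF
  | succ m ih =>
    refine ⟨ExpBdd.sum fun j => (hF j).1, fun c => ?_⟩
    have hpd : (fun t => pd (fun x => ∑ j, F j t x) c) = fun t x => ∑ j, pd (F j t) c x := by
      ext t x; exact pd_sum _ (fun j _ => (hFs j).differentiable t x) c
    rw [hpd]
    exact ih (fun j => slabBddC_pd (hFs j) c) fun j => expBddC_pd (hF j) c

lemma ExpBddC.mul {m : ℕ} (hfs : SlabBddC m f) (hgs : SlabBddC m g) (hf : ExpBddC m T lam A f)
    (hg : ExpBddC m T mu B g) :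
    ExpBddC m T (lam + mu) (2 ^ m * (A * B)) fun t x => f t x * g t x := by
  induction m generalizing f g with
  | zero => rw [pow_zero, one_mul]; exact ExpBdd.mul hf hg
  | succ m ih =>
    have hAB : 0 ≤ A * B := mul_nonneg hf.1.nonneg hg.1.nonneg
    refine ⟨(hf.1.mul hg.1).mono (le_mul_of_one_le_left hAB (one_le_pow₀ one_le_two)),
      fun j => ?_⟩
    have hpd : (fun t => pd (fun x => f t x * g t x) j) =
        fun t x => pd (f t) j x * g t x + f t x * pd (g t) j x := by
      ext t x; exact pd_mul (hfs.differentiable t x) (hgs.differentiable t x) j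
    rw [hpd, pow_succ', two_mul, add_mul]
    exact ExpBddC.add ((slabBddC_pd hfs j).mul hgs.of_succ) (hfs.of_succ.mul (slabBddC_pd hgs j))
      (ih (slabBddC_pd hfs j) hgs.of_succ (expBddC_pd hf j) hg.of_succ)
      (ih hfs.of_succ (slabBddC_pd hgs j) hf.of_succ (expBddC_pd hg j))

lemma SlabBddC.exists_expBddC {m : ℕ} (hf : SlabBddC m f) (T : ℝ) : ∃ A, ExpBddC m T 0 A f := by
  have hbdd : ∀ {g : ℝ → E n → ℝ}, SlabBdd g → ∃ A, ExpBdd T 0 A g := fun hg =>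
    (hg.exists_abs_le T).imp fun A hA => expBdd_zero_iff.2 hA
  induction m generalizing f with
  | zero => exact hbdd hf
  | succ m ih =>
    obtain ⟨A, hA⟩ := hbdd hf.1
    choose D hD using fun j => ih (slabBddC_pd hf j)
    obtain ⟨M, hM⟩ := (Set.finite_range D).bddAbove
    exact ⟨max A M, hA.mono (le_max_left A M),
      fun j => (hD j).mono ((hM (mem_range_self j)).trans (le_max_right A M))⟩

lemma expBdd_heatFlow {ν : ℝ} {f : E n → ℝ} (hlam : 0 ≤ lam) (hf : ∀ x, |f x| ≤ B) :
    ExpBdd T lam B fun t => heatFlow ν t f := by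
  have hheat : ExpBdd T 0 B fun t => heatFlow ν t f :=
    expBdd_zero_iff.2 fun t _ => abs_heatFlow_le ν t hf
  exact hheat.mono_weight hlam

end WeightedBounds

section DuhamelEstimates

open MeasureTheory Topology

variable {n : ℕ} {ν T lam B : ℝ} {F : ℝ → E n → ℝ}

lemma integrableOn_rpow_mul_exp_neg {a : ℝ} (ha : 0 < a) (hlam : 0 < lam) :
    IntegrableOn (fun r => r ^ (a - 1) * Real.exp (-(lam * r))) (Ioi 0) := by
  refine Integrable.of_integral_ne_zero ?_
  rw [Real.integral_rpow_mul_exp_neg_mul_Ioi ha hlam]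
  have := Real.Gamma_pos_of_pos ha
  positivity

lemma integral_rpow_mul_exp_neg_le {a t : ℝ} (ha : 0 < a) (hlam : 0 < lam) (ht : 0 ≤ t) :
    ∫ r in (0 : ℝ)..t, r ^ (a - 1) * Real.exp (-(lam * r)) ≤ (1 / lam) ^ a * Real.Gamma a := by
  rw [← Real.integral_rpow_mul_exp_neg_mul_Ioi ha hlam, intervalIntegral.integral_of_le ht]
  refine setIntegral_mono_set (integrableOn_rpow_mul_exp_neg ha hlam) ?_
    Ioc_subset_Ioi_self.eventuallyLE
  filter_upwards [self_mem_ae_restrict measurableSet_Ioi] with r (hr : 0 < r)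
  simp only [Pi.zero_apply]
  positivity

lemma expBdd_duhamel_of_abs_heatFlow_le {a A : ℝ} (ha : 0 < a) (hlam : 0 < lam) (hA : 0 ≤ A)
    (hF : ∀ s t, 0 < s → s < t → t ≤ T → ∀ x,
      |heatFlow ν (t - s) (F s) x| ≤ A * (t - s) ^ (a - 1) * Real.exp (lam * s)) :
    ExpBdd T lam (A * ((1 / lam) ^ a * Real.Gamma a)) (duhamel ν F) := fun t ht x => by
  set τ := max t 0
  have hτ0 : 0 ≤ τ := le_max_right t 0
  set k : ℝ → ℝ := fun r => r ^ (a - 1) * Real.exp (-(lam * r)) with hk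
  have hkint : IntervalIntegrable k volume 0 τ :=
    (intervalIntegrable_iff_integrableOn_Ioc_of_le hτ0).2
      ((integrableOn_rpow_mul_exp_neg ha hlam).mono_set Ioc_subset_Ioi_self)
  have hbound : IntervalIntegrable (fun s => A * Real.exp (lam * τ) * k (τ - s)) volume 0 τ := by
    simpa using ((hkint.comp_sub_left τ).const_mul (A * Real.exp (lam * τ))).symm
  have hle : |duhamel ν F t x| ≤ ∫ s in (0 : ℝ)..τ, A * Real.exp (lam * τ) * k (τ - s) := by
    rw [duhamel, ← Real.norm_eq_abs]
    refine intervalIntegral.norm_integral_le_of_norm_le hτ0 ?_ hbound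
    filter_upwards [compl_mem_ae_iff.2 (measure_singleton (μ := volume) τ)] with s hsτ hs
    have hpos : t = τ := (max_eq_left ((lt_max_iff.1 (hs.1.trans_le hs.2)).resolve_right
      (lt_irrefl 0)).le).symm
    have hexp : Real.exp (lam * s) = Real.exp (lam * τ) * Real.exp (-(lam * (τ - s))) := by
      rw [← Real.exp_add]; ring_nf
    refine (hF s τ hs.1 (lt_of_le_of_ne hs.2 hsτ) (hpos ▸ ht) x).trans_eq ?_
    rw [hexp, hk]
    ring
  refine hle.trans ?_
  rw [intervalIntegral.integral_const_mul, intervalIntegral.integral_comp_sub_left k, sub_self,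
    sub_zero, mul_right_comm A]
  gcongr
  exact integral_rpow_mul_exp_neg_le ha hlam hτ0

lemma expBdd_duhamel (hlam : 0 < lam) (hF : ExpBdd T lam B F) :
    ExpBdd T lam (B / lam) (duhamel ν F) := by
  have key := expBdd_duhamel_of_abs_heatFlow_le (ν := ν) one_pos hlam hF.nonneg
    fun s t hs hst ht x => by
      simpa [max_eq_left hs.le] using abs_heatFlow_le ν (t - s) (hF s (hst.le.trans ht)) x
  simpa [div_eq_mul_inv] using key

/-- The factor by which Duhamel's integral of a spatial derivative `∂ⱼF` is smaller than `F` in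
the norm with weight `e^{-lam t}`. -/
def smoothing (n : ℕ) (ν lam : ℝ) : ℝ :=
  gaussMoment n / √(2 * ν) * ((1 / lam) ^ (1 / 2 : ℝ) * Real.Gamma (1 / 2))

lemma tendsto_smoothing (n : ℕ) (ν : ℝ) : Tendsto (smoothing n ν) atTop (𝓝 0) := by
  have hpow : Tendsto (fun lam : ℝ => (1 / lam) ^ (1 / 2 : ℝ)) atTop (𝓝 0) := by
    simpa using (tendsto_inv_atTop_zero (𝕜 := ℝ)).rpow_const (p := 1 / 2) (.inr (by norm_num))
  have hmul := (hpow.mul_const (Real.Gamma (1 / 2))).const_mul (gaussMoment n / √(2 * ν))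
  rwa [zero_mul, mul_zero] at hmul

lemma expBdd_duhamel_pd (hν : 0 < ν) (hlam : 0 < lam) (hFs : SlabBddC 1 F)
    (hF : ExpBdd T lam B F) (j : Fin n) :
    ExpBdd T lam (smoothing n ν lam * B) (duhamel ν fun s => pd (F s) j) := by
  have hB := hF.nonneg
  have hmoment := gaussMoment_nonneg n
  have key := expBdd_duhamel_of_abs_heatFlow_le (ν := ν) (T := T) (F := fun s => pd (F s) j)
    (a := 1 / 2) (A := gaussMoment n / √(2 * ν) * B) (by norm_num) hlam (by positivity)
    fun s t hs hst ht x => ?_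
  · rwa [mul_right_comm] at key
  have hr : 0 < t - s := sub_pos.2 hst
  have hrpow : (t - s) ^ ((1 / 2 : ℝ) - 1) = (√(t - s))⁻¹ := by
    rw [Real.sqrt_eq_rpow, ← Real.rpow_neg hr.le]; norm_num
  refine (abs_heatFlow_pd_le hν hr (hFs.freeze s) (hF s (hst.le.trans ht)) j x).trans_eq ?_
  rw [hrpow, Real.sqrt_mul (by positivity), max_eq_left hs.le]
  field_simp

lemma expBddC_duhamel {m : ℕ} {κ : ℝ} (hν : 0 < ν) (hlam : 0 < lam) (hκ : 1 / lam ≤ κ)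
    (hκ' : smoothing n ν lam ≤ κ) (hFs : SlabBddC (m + 1) F) (hF : ExpBddC m T lam B F) :
    ExpBddC (m + 1) T lam (κ * B) (duhamel ν F) := by
  have hzero : ∀ {G : ℝ → E n → ℝ}, ExpBdd T lam B G → ExpBdd T lam (κ * B) (duhamel ν G) :=
    fun hG => (expBdd_duhamel hlam hG).mono <| by
      have hB := hG.nonneg
      rw [div_eq_inv_mul, ← one_div]
      gcongr
  induction m generalizing F with
  | zero =>
    refine ⟨hzero hF, fun j => ?_⟩
    rw [funext₂ fun t x => pd_duhamel ν hFs t j x]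
    have hB := ExpBdd.nonneg hF
    exact (expBdd_duhamel_pd hν hlam hFs hF j).mono (by gcongr)
  | succ m ih =>
    refine ⟨hzero hF.1, fun j => ?_⟩
    rw [funext₂ fun t x => pd_duhamel ν hFs.one_of_succ t j x]
    exact ih (slabBddC_pd hFs j) (expBddC_pd hF j)

end DuhamelEstimates

section MildSolutions

variable {n : ℕ} {ν T lam B H : ℝ} {f : E n → ℝ} {F G : ℝ → E n → ℝ}

/-- The mild solution of the heat equation `∂w/∂t = νΔw + F` with initial data `f`; for `t ≤ 0` it
is frozen at `f`. -/
def mildSolution (ν : ℝ) (f : E n → ℝ) (F : ℝ → E n → ℝ) (t : ℝ) (x : E n) : ℝ :=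
  heatFlow ν t f x + duhamel ν F t x

lemma slabBddC_mildSolution (ν : ℝ) {m : ℕ} (hf : SlabBddC m fun _ => f) (hF : SlabBddC m F) :
    SlabBddC m (mildSolution ν f F) :=
  (slabBddC_heatFlow ν hf).add (slabBddC_duhamel ν hF)

lemma mildSolution_of_nonpos (hν : 0 ≤ ν) {t : ℝ} (ht : t ≤ 0) (f : E n → ℝ)
    (F : ℝ → E n → ℝ) : mildSolution ν f F t = f := by
  ext x
  rw [mildSolution, heatFlow_of_nonpos hν ht, duhamel_of_nonpos ht, add_zero]

lemma mildSolution_sub_mildSolution (f : E n → ℝ) (hF : SlabBdd F) (hG : SlabBdd G) (t : ℝ)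
    (x : E n) : mildSolution ν f F t x - mildSolution ν f G t x =
      duhamel ν (fun s y => F s y - G s y) t x := by
  rw [duhamel_sub hF hG, mildSolution, mildSolution, add_sub_add_left_eq_sub]

lemma pd_mildSolution (ν : ℝ) (hf : SlabBddC 1 fun _ => f) (hF : SlabBddC 1 F) (t : ℝ)
    (j : Fin n) : pd (mildSolution ν f F t) j =
      mildSolution ν (pd f j) (fun s => pd (F s) j) t := by
  ext x
  rw [mildSolution, ← pd_heatFlow ν hf, ← pd_duhamel ν hF]
  exact pd_add ((slabBddC_heatFlow ν hf).differentiable t x)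
    ((slabBddC_duhamel ν hF).differentiable t x) j

lemma hasDerivAt_mildSolution (hν : 0 < ν) (hf : SlabBddC 2 fun _ => f) (hF : SlabBddC 2 F)
    {t : ℝ} (ht : 0 < t) (x : E n) :
    HasDerivAt (fun s => mildSolution ν f F s x)
      (ν * ∑ j, pd (pd (mildSolution ν f F t) j) j x + F t x) t := by
  have hpd : ∀ j, pd (pd (mildSolution ν f F t) j) j x =
      heatFlow ν t (pd (pd f j) j) x + duhamel ν (fun s => pd (pd (F s) j) j) t x := fun j => by
    rw [pd_mildSolution ν hf.one_of_succ hF.one_of_succ,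
      pd_mildSolution ν (slabBddC_pd hf j) (slabBddC_pd hF j), mildSolution]
  refine ((hasDerivAt_heatFlow hν ht hf x).add (hasDerivAt_duhamel hν ht hF x)).congr_deriv ?_
  simp only [hpd, Finset.sum_add_distrib]
  ring

lemma expBdd_pd_mildSolution (hν : 0 < ν) (hlam : 0 < lam) (hf : SlabBddC 1 fun _ => f)
    (hFs : SlabBddC 1 F) {j : Fin n} (hH : ∀ x, |pd f j x| ≤ H) (hF : ExpBdd T lam B F) :
    ExpBdd T lam (H + smoothing n ν lam * B) fun t => pd (mildSolution ν f F t) j := by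
  rw [funext fun t => pd_mildSolution ν hf hFs t j]
  exact (expBdd_heatFlow hlam.le hH).add (expBdd_duhamel_pd hν hlam hFs hF j)

end MildSolutions

section Transport

variable {n : ℕ} {T L lam A B G : ℝ} {χ : ℝ → ℝ} {u v : Fin n → ℝ → E n → ℝ}

/-- Smooth functions bounded by `L` together with their first two derivatives. -/
structure C2Bdd (χ : ℝ → ℝ) (L : ℝ) : Prop where
  contDiff : ContDiff ℝ (⊤ : ℕ∞) χ
  abs_le : ∀ s, |χ s| ≤ L
  abs_deriv_le : ∀ s, |deriv χ s| ≤ L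
  abs_deriv_deriv_le : ∀ s, |deriv (deriv χ) s| ≤ L

lemma C2Bdd.nonneg (hχ : C2Bdd χ L) : 0 ≤ L :=
  (abs_nonneg _).trans (hχ.abs_le 0)

lemma C2Bdd.differentiable (hχ : C2Bdd χ L) : Differentiable ℝ χ :=
  hχ.contDiff.differentiable (by simp)

lemma C2Bdd.contDiff_deriv (hχ : C2Bdd χ L) : ContDiff ℝ (⊤ : ℕ∞) (deriv χ) :=
  (contDiff_infty_iff_deriv.1 hχ.contDiff).2

lemma abs_sub_le_of_abs_deriv_le {φ : ℝ → ℝ} (hφ : Differentiable ℝ φ)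
    (hL : ∀ s, |deriv φ s| ≤ L) (a b : ℝ) : |φ a - φ b| ≤ L * |a - b| :=
  convex_univ.norm_image_sub_le_of_norm_deriv_le (fun s _ => hφ s) (fun s _ => hL s)
    (mem_univ b) (mem_univ a)

lemma ExpBdd.comp_sub_comp {φ : ℝ → ℝ} (hφ : Differentiable ℝ φ) (hL : ∀ s, |deriv φ s| ≤ L)
    {f g : ℝ → E n → ℝ} (hfg : ExpBdd T lam B fun t x => f t x - g t x) :
    ExpBdd T lam (L * B) fun t x => φ (f t x) - φ (g t x) := fun t ht x => by
  have hL0 : 0 ≤ L := (abs_nonneg _).trans (hL 0)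
  rw [mul_assoc]
  exact (abs_sub_le_of_abs_deriv_le hφ hL _ _).trans (by gcongr; exact hfg t ht x)

lemma C2Bdd.expBdd_comp (hχ : C2Bdd χ L) (f : ℝ → E n → ℝ) :
    ExpBdd T 0 L fun t x => χ (f t x) :=
  expBdd_zero_iff.2 fun _ _ _ => hχ.abs_le _

lemma C2Bdd.expBdd_deriv_comp (hχ : C2Bdd χ L) (f : ℝ → E n → ℝ) :
    ExpBdd T 0 L fun t x => deriv χ (f t x) :=
  expBdd_zero_iff.2 fun _ _ _ => hχ.abs_deriv_le _

lemma C2Bdd.expBddC_comp (hχ : C2Bdd χ L) {f : ℝ → E n → ℝ} (hf : SlabBddC 1 f) (hG : 0 ≤ G)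
    (hfG : ∀ j, ExpBdd T 0 G fun t => pd (f t) j) :
    ExpBddC 1 T 0 (L * (G + 1)) fun t x => χ (f t x) := by
  have hL := hχ.nonneg
  refine ⟨(hχ.expBdd_comp f).mono (by nlinarith), fun j => ?_⟩
  rw [funext₂ fun t x => pd_comp hχ.differentiable (hf.differentiable t x) j, ← add_zero 0]
  exact ((hχ.expBdd_deriv_comp f).mul (hfG j)).mono (by nlinarith)

lemma C2Bdd.expBddC_comp_sub_comp (hχ : C2Bdd χ L) {f g : ℝ → E n → ℝ} (hf : SlabBddC 1 f)
    (hg : SlabBddC 1 g) (hG : 0 ≤ G) (hfG : ∀ j, ExpBdd T 0 G fun t => pd (f t) j)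
    (hfg : ExpBddC 1 T lam B fun t x => f t x - g t x) :
    ExpBddC 1 T lam (L * (G + 1) * B) fun t x => χ (f t x) - χ (g t x) := by
  have hLB := mul_nonneg hχ.nonneg hfg.expBdd.nonneg
  refine ⟨(hfg.expBdd.comp_sub_comp hχ.differentiable hχ.abs_deriv_le).mono (by nlinarith),
    fun j => ?_⟩
  have hpd : (fun t => pd (fun x => χ (f t x) - χ (g t x)) j) = fun t x =>
      (deriv χ (f t x) - deriv χ (g t x)) * pd (f t) j x +
        deriv χ (g t x) * pd (fun x => f t x - g t x) j x := by
    ext t x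
    have hd := hχ.differentiable
    have hcomp : ∀ {f : ℝ → E n → ℝ}, SlabBddC 1 f → DifferentiableAt ℝ (fun x => χ (f t x)) x :=
      fun hf => (hd _).comp x (hf.differentiable t x)
    rw [pd_sub (hcomp hf) (hcomp hg), pd_comp hd (hf.differentiable t x),
      pd_comp hd (hg.differentiable t x), pd_sub (hf.differentiable t x) (hg.differentiable t x)]
    ring
  have hfirst := (hfg.expBdd.comp_sub_comp (hχ.contDiff_deriv.differentiable (by simp))
    hχ.abs_deriv_deriv_le).mul (hfG j)
  have hsecond := (hχ.expBdd_deriv_comp g).mul (expBddC_pd hfg j)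
  rw [add_zero] at hfirst
  rw [zero_add] at hsecond
  rw [hpd]
  exact (hfirst.add hsecond).mono (by nlinarith)

/-- The convection term `∑ⱼ χ(vⱼ) ∂ⱼvᵢ`; Burgers' system is the case `χ s = -s`. -/
def transport (χ : ℝ → ℝ) (v : Fin n → ℝ → E n → ℝ) (i : Fin n) (t : ℝ) (x : E n) : ℝ :=
  ∑ j, χ (v j t x) * pd (v i t) j x

lemma slabBddC_transport {m : ℕ} (hχ : C2Bdd χ L) (hv : ∀ i, SlabBddC (m + 1) (v i))
    (i : Fin n) : SlabBddC m (transport χ v i) :=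
  SlabBddC.sum _ fun j => ((hv j).of_succ.comp hχ.contDiff).mul (slabBddC_pd (hv i) j)

lemma pd_transport (hχ : C2Bdd χ L) (hv : ∀ i, SlabBddC 2 (v i)) (i : Fin n) (t : ℝ)
    (k : Fin n) (x : E n) : pd (transport χ v i t) k x =
      ∑ j, (deriv χ (v j t x) * pd (v j t) k x * pd (v i t) j x
        + χ (v j t x) * pd (pd (v i t) j) k x) := by
  have hd := hχ.differentiable
  have hvd : ∀ j, DifferentiableAt ℝ (v j t) x := fun j => (hv j).differentiable t x
  have hpd : ∀ j, DifferentiableAt ℝ (pd (v i t) j) x :=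
    fun j => (slabBddC_pd (hv i) j).differentiable t x
  have hcomp : ∀ j, DifferentiableAt ℝ (fun y => χ (v j t y)) x := fun j => (hd _).comp x (hvd j)
  refine (pd_sum _ (fun j _ => (hcomp j).fun_mul (hpd j)) k).trans
    (Finset.sum_congr rfl fun j _ => ?_)
  rw [pd_mul (hcomp j) (hpd j), pd_comp hd (hvd j)]

lemma expBdd_transport (hχ : C2Bdd χ L) {i : Fin n}
    (hv : ∀ j, ExpBdd T lam B fun t => pd (v i t) j) :
    ExpBdd T lam (n * (L * B)) (transport χ v i) :=
  ExpBdd.sum fun j => by simpa using (hχ.expBdd_comp (v j)).mul (hv j)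

lemma expBdd_pd_transport (hχ : C2Bdd χ L) (hvs : ∀ i, SlabBddC 2 (v i))
    (hv : ∀ i j, ExpBdd T lam A fun t => pd (v i t) j)
    (hv' : ∀ i j k, ExpBdd T (2 * lam) B fun t => pd (pd (v i t) j) k) (i k : Fin n) :
    ExpBdd T (2 * lam) (n * (L * (A ^ 2 + B))) fun t => pd (transport χ v i t) k := by
  rw [funext₂ fun t x => pd_transport hχ hvs i t k x]
  refine ExpBdd.sum fun j => ?_
  have hfirst := ((hχ.expBdd_deriv_comp (v j)).mul (hv j k)).mul (hv i j)
  have hsecond := (hχ.expBdd_comp (v j)).mul (hv' i j k)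
  rw [zero_add, ← two_mul] at hfirst
  rw [zero_add] at hsecond
  exact (hfirst.add hsecond).mono (by apply le_of_eq; ring)

lemma expBddC_transport_sub_transport (hχ : C2Bdd χ L) (hus : ∀ i, SlabBddC 2 (u i))
    (hvs : ∀ i, SlabBddC 2 (v i)) (hG : 0 ≤ G)
    (hu : ∀ i j, ExpBddC 1 T 0 G fun t => pd (u i t) j)
    (hv : ∀ i j, ExpBdd T 0 G fun t => pd (v i t) j)
    (huv : ∀ i, ExpBddC 2 T lam B fun t x => u i t x - v i t x) (i : Fin n) :
    ExpBddC 1 T lam (n * (2 * L * (G + 1) ^ 2) * B)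
      fun t x => transport χ u i t x - transport χ v i t x := by
  have hsplit : (fun t x => transport χ u i t x - transport χ v i t x) = fun t x =>
      ∑ j, ((χ (u j t x) - χ (v j t x)) * pd (u i t) j x +
        χ (v j t x) * pd (fun x => u i t x - v i t x) j x) := by
    ext t x
    simp only [transport, ← Finset.sum_sub_distrib]
    refine Finset.sum_congr rfl fun j _ => ?_
    rw [pd_sub ((hus i).differentiable t x) ((hvs i).differentiable t x)]
    ring
  have hχv : ∀ j, SlabBddC 1 fun t x => χ (v j t x) := fun j => (hvs j).of_succ.comp hχ.contDiff
  have hχd : ∀ j, SlabBddC 1 fun t x => χ (u j t x) - χ (v j t x) := fun j =>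
    ((hus j).of_succ.comp hχ.contDiff).sub (hχv j)
  have hwd : ∀ j, SlabBddC 1 fun t => pd (fun x => u i t x - v i t x) j :=
    slabBddC_pd ((hus i).sub (hvs i))
  have hfirst : ∀ j, ExpBddC 1 T lam (2 ^ 1 * (L * (G + 1) * B * G))
      fun t x => (χ (u j t x) - χ (v j t x)) * pd (u i t) j x := fun j => by
    simpa only [add_zero] using (hχ.expBddC_comp_sub_comp (hus j).of_succ (hvs j).of_succ hG
      (fun k => (hu j k).expBdd) (huv j).of_succ).mul (hχd j) (slabBddC_pd (hus i) j) (hu i j)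
  have hsecond : ∀ j, ExpBddC 1 T lam (2 ^ 1 * (L * (G + 1) * B))
      fun t x => χ (v j t x) * pd (fun x => u i t x - v i t x) j x := fun j => by
    simpa only [zero_add] using (hχ.expBddC_comp (hvs j).of_succ hG (hv j)).mul (hχv j) (hwd j)
      (expBddC_pd (huv i) j)
  rw [hsplit]
  refine (ExpBddC.sum (fun j => ((hχd j).mul (slabBddC_pd (hus i) j)).add ((hχv j).mul (hwd j)))
    fun j => (hfirst j).add ((hχd j).mul (slabBddC_pd (hus i) j)) ((hχv j).mul (hwd j))
      (hsecond j)).mono ?_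
  apply le_of_eq
  ring

end Transport

section Picard

open Topology

variable {n : ℕ} {ν T L lam κ B G K H : ℝ} {χ : ℝ → ℝ} {h : Fin n → E n → ℝ}
  {u v : Fin n → ℝ → E n → ℝ}

/-- One step of the Picard iteration for `∂vᵢ/∂t = νΔvᵢ + ∑ⱼ χ(vⱼ) ∂ⱼvᵢ` with initial data `h`. -/
def picard (ν : ℝ) (χ : ℝ → ℝ) (h : Fin n → E n → ℝ) (v : Fin n → ℝ → E n → ℝ) (i : Fin n) :
    ℝ → E n → ℝ :=
  mildSolution ν (h i) (transport χ v i)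

/-- The Picard iterates, started from the initial data. -/
def picardIter (ν : ℝ) (χ : ℝ → ℝ) (h : Fin n → E n → ℝ) : ℕ → Fin n → ℝ → E n → ℝ
  | 0 => fun i _ => h i
  | k + 1 => picard ν χ h (picardIter ν χ h k)

lemma slabBddC_picard {m : ℕ} (hχ : C2Bdd χ L) (hh : ∀ i, SlabBddC m fun _ => h i)
    (hv : ∀ i, SlabBddC (m + 1) (v i)) (i : Fin n) : SlabBddC m (picard ν χ h v i) :=
  slabBddC_mildSolution ν (hh i) (slabBddC_transport hχ hv i)

lemma slabBddC_picardIter (hχ : C2Bdd χ L) (hh : ∀ m i, SlabBddC m fun _ => h i) (k : ℕ) :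
    ∀ m i, SlabBddC m (picardIter ν χ h k i) := by
  induction k with
  | zero => exact hh
  | succ k ih => exact fun m => slabBddC_picard hχ (hh m) (ih (m + 1))

lemma picardIter_of_nonpos (hν : 0 ≤ ν) (k : ℕ) (i : Fin n) {t : ℝ} (ht : t ≤ 0) :
    picardIter ν χ h k i t = h i := by
  cases k with
  | zero => rfl
  | succ k => exact mildSolution_of_nonpos hν ht (h i) _

/-- Exponential bounds on the first and second derivatives, of the form propagated by the Picard
iteration when `H` bounds the derivatives of the data and `K` is large. -/
structure DerivBound (T K H : ℝ) (v : Fin n → ℝ → E n → ℝ) : Prop where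
  first : ∀ i j, ExpBdd T K (2 * H) fun t => pd (v i t) j
  second : ∀ i j k, ExpBdd T (2 * K) (4 * H ^ 2 + 2 * H) fun t => pd (pd (v i t) j) k

lemma derivBound_const (hK : 0 ≤ K) (hH : ∀ i j x, |pd (h i) j x| ≤ H)
    (hH' : ∀ i j k x, |pd (pd (h i) j) k x| ≤ H) : DerivBound T K H fun i _ => h i := by
  have hexp : ∀ {K C : ℝ} {f : E n → ℝ}, 0 ≤ K → H ≤ C → (∀ x, |f x| ≤ H) →
      ExpBdd T K C fun _ => f := fun hK hC hf =>
    ((expBdd_zero_iff.2 fun _ _ => hf).mono hC).mono_weight hK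
  refine ⟨fun i j => hexp hK ?_ (hH i j), fun i j k => hexp (by positivity) ?_ (hH' i j k)⟩
  · linarith [(abs_nonneg _).trans (hH i j 0)]
  · nlinarith [(abs_nonneg _).trans (hH i j 0)]

lemma derivBound_picard (hν : 0 < ν) (hχ : C2Bdd χ L) (hh : ∀ i, SlabBddC 2 fun _ => h i)
    (hvs : ∀ i, SlabBddC 3 (v i)) (hK : 0 < K) (hsmooth : smoothing n ν K * (n * L) ≤ 1 / 2)
    (hsmooth' : smoothing n ν (2 * K) * (n * L) ≤ 1 / 2) (hH : ∀ i j x, |pd (h i) j x| ≤ H)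
    (hH' : ∀ i j k x, |pd (pd (h i) j) k x| ≤ H) (hv : DerivBound T K H v) :
    DerivBound T K H (picard ν χ h v) := by
  have hF := slabBddC_transport hχ hvs
  refine ⟨fun i j => ?_, fun i j k => ?_⟩
  · have hH0 : 0 ≤ H := (abs_nonneg _).trans (hH i j 0)
    refine (expBdd_pd_mildSolution hν hK (hh i).one_of_succ (hF i).one_of_succ (hH i j)
      (expBdd_transport hχ (hv.first i))).mono ?_
    nlinarith
  · have hH0 : 0 ≤ H := (abs_nonneg _).trans (hH i j 0)
    have hpd : ∀ t, pd (picard ν χ h v i t) j =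
        mildSolution ν (pd (h i) j) (fun s => pd (transport χ v i s) j) t :=
      fun t => pd_mildSolution ν (hh i).one_of_succ (hF i).one_of_succ t j
    simp only [hpd]
    refine (expBdd_pd_mildSolution hν (by positivity) (slabBddC_pd (hh i) j)
      (slabBddC_pd (hF i) j) (hH' i j k)
      (expBdd_pd_transport hχ (fun i => (hvs i).of_succ) hv.first hv.second i j)).mono ?_
    nlinarith

lemma derivBound_picardIter (hν : 0 < ν) (hχ : C2Bdd χ L) (hh : ∀ m i, SlabBddC m fun _ => h i)
    (hK : 0 < K) (hsmooth : smoothing n ν K * (n * L) ≤ 1 / 2)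
    (hsmooth' : smoothing n ν (2 * K) * (n * L) ≤ 1 / 2) (hH : ∀ i j x, |pd (h i) j x| ≤ H)
    (hH' : ∀ i j k x, |pd (pd (h i) j) k x| ≤ H) (k : ℕ) :
    DerivBound T K H (picardIter ν χ h k) := by
  induction k with
  | zero => exact derivBound_const hK.le hH hH'
  | succ k ih =>
    exact derivBound_picard hν hχ (hh 2) (slabBddC_picardIter hχ hh k 3) hK hsmooth hsmooth' hH
      hH' ih

lemma expBddC_picard_sub_picard (hν : 0 < ν) (hχ : C2Bdd χ L) (hus : ∀ i, SlabBddC 3 (u i))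
    (hvs : ∀ i, SlabBddC 3 (v i)) (hlam : 0 < lam)
    (hκ : 1 / lam ≤ κ) (hκ' : smoothing n ν lam ≤ κ) (hG : 0 ≤ G)
    (hu : ∀ i j, ExpBddC 1 T 0 G fun t => pd (u i t) j)
    (hv : ∀ i j, ExpBdd T 0 G fun t => pd (v i t) j)
    (huv : ∀ i, ExpBddC 2 T lam B fun t x => u i t x - v i t x) (i : Fin n) :
    ExpBddC 2 T lam (κ * (n * (2 * L * (G + 1) ^ 2) * B))
      fun t x => picard ν χ h u i t x - picard ν χ h v i t x := by
  have hFu := slabBddC_transport hχ hus i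
  have hFv := slabBddC_transport hχ hvs i
  have hsub : (fun t x => picard ν χ h u i t x - picard ν χ h v i t x) =
      duhamel ν fun t x => transport χ u i t x - transport χ v i t x := by
    ext t x; exact mildSolution_sub_mildSolution (h i) hFu.slabBdd hFv.slabBdd t x
  rw [hsub]
  exact expBddC_duhamel hν hlam hκ hκ' (hFu.sub hFv)
    (expBddC_transport_sub_transport hχ (fun i => (hus i).of_succ) (fun i => (hvs i).of_succ)
      hG hu hv huv i)

lemma exists_forall_expBddC_pd (T : ℝ) (hK : 0 ≤ K) (hH : 0 ≤ H) :
    ∃ G, 0 ≤ G ∧ ∀ v : Fin n → ℝ → E n → ℝ, DerivBound T K H v →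
      ∀ i j, ExpBddC 1 T 0 G fun t => pd (v i t) j := by
  set G₁ := 2 * H * Real.exp (K * max T 0)
  set G₂ := (4 * H ^ 2 + 2 * H) * Real.exp (2 * K * max T 0)
  refine ⟨max G₁ G₂, by positivity, fun v hv i j => ⟨?_, fun k => ?_⟩⟩
  · exact ((hv.first i j).zero_weight hK).mono (le_max_left G₁ G₂)
  · exact ((hv.second i j k).zero_weight (by positivity)).mono (le_max_right G₁ G₂)

lemma exists_weight (n : ℕ) (ν : ℝ) (hκ : 0 < κ) :
    ∃ lam, 0 < lam ∧ 1 / lam ≤ κ ∧ smoothing n ν lam ≤ κ := by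
  have hinv : Tendsto (fun lam : ℝ => 1 / lam) atTop (𝓝 0) := by
    simpa only [one_div] using tendsto_inv_atTop_zero
  exact ((eventually_gt_atTop 0).and ((hinv.eventually_le_const hκ).and
    ((tendsto_smoothing n ν).eventually_le_const hκ))).exists

lemma exists_expBddC_picardIter_sub (hν : 0 < ν) (hχ : C2Bdd χ L)
    (hh : ∀ m i, SlabBddC m fun _ => h i) (hG : 0 ≤ G)
    (hb : ∀ k i j, ExpBddC 1 T 0 G fun t => pd (picardIter ν χ h k i t) j) :
    ∃ A, ∀ k i, ExpBddC 2 T 0 (A * (1 / 2) ^ k)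
      fun t x => picardIter ν χ h (k + 1) i t x - picardIter ν χ h k i t x := by
  have hL := hχ.nonneg
  have hs := slabBddC_picardIter (ν := ν) hχ hh
  set Q := n * (2 * L * (G + 1) ^ 2)
  have : 0 ≤ Q := by positivity
  obtain ⟨lam, hlam, hκ, hκ'⟩ := exists_weight n ν (κ := 1 / (2 * (Q + 1))) (by positivity)
  choose D hD using fun i => ((hs 1 2 i).sub (hs 0 2 i)).exists_expBddC T
  obtain ⟨B, hB⟩ := (finite_range D).bddAbove
  have hgeom : ∀ k i, ExpBddC 2 T lam (B * (1 / 2) ^ k)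
      fun t x => picardIter ν χ h (k + 1) i t x - picardIter ν χ h k i t x := by
    intro k
    induction k with
    | zero =>
      intro i
      rw [pow_zero, mul_one]
      exact ((hD i).of_forall fun hf => hf.mono_weight hlam.le).mono (hB (mem_range_self i))
    | succ k ih =>
      intro i
      have hB0 : 0 ≤ B * (1 / 2) ^ k := (ih i).expBdd.nonneg
      refine (expBddC_picard_sub_picard hν hχ (hs (k + 1) 3) (hs k 3) hlam hκ hκ' hG
        (hb (k + 1)) (fun i j => (hb k i j).expBdd) ih i).mono ?_
      have hhalf : 1 / (2 * (Q + 1)) * Q ≤ 1 / 2 := by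
        rw [div_mul_eq_mul_div, one_mul, div_le_div_iff₀ (by positivity) two_pos]
        linarith
      calc 1 / (2 * (Q + 1)) * (Q * (B * (1 / 2) ^ k))
          = 1 / (2 * (Q + 1)) * Q * (B * (1 / 2) ^ k) := by ring
        _ ≤ 1 / 2 * (B * (1 / 2) ^ k) := by gcongr
        _ = B * (1 / 2) ^ (k + 1) := by ring
  refine ⟨B * Real.exp (lam * max T 0), fun k i => ?_⟩
  rw [mul_right_comm]
  exact (hgeom k i).of_forall fun hf => hf.zero_weight hlam.le

end Picard

section Convergence

open Topology

variable {n m : ℕ} {T lam B : ℝ} {f : ℕ → ℝ → E n → ℝ} {g : ℝ → E n → ℝ}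

/-- Consecutive terms are `2⁻ᵏ`-close, with all spatial derivatives of order at most `m`, uniformly
on each slab `(-∞, T] × ℝⁿ`. -/
def GeomCauchyC (m : ℕ) (f : ℕ → ℝ → E n → ℝ) : Prop :=
  ∀ T, ∃ A, ∀ k, ExpBddC m T 0 (A * (1 / 2) ^ k) fun t x => f (k + 1) t x - f k t x

/-- Convergence at the rate `2⁻ᵏ`, with all spatial derivatives of order at most `m`, uniformly on
each slab `(-∞, T] × ℝⁿ`. -/
def GeomTendstoC (m : ℕ) (f : ℕ → ℝ → E n → ℝ) (g : ℝ → E n → ℝ) : Prop :=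
  ∀ T, ∃ A, ∀ k, ExpBddC m T 0 (A * (1 / 2) ^ k) fun t x => f k t x - g t x

lemma tendsto_const_mul_half_pow (A : ℝ) :
    Tendsto (fun k : ℕ => A * (1 / 2 : ℝ) ^ k) atTop (𝓝 0) := by
  simpa only [mul_zero] using (tendsto_pow_atTop_nhds_zero_of_lt_one (r := (1 / 2 : ℝ))
    (by norm_num) (by norm_num)).const_mul A

lemma GeomTendstoC.tendstoUniformlyOn (hg : GeomTendstoC m f g) (T : ℝ) :
    TendstoUniformlyOn (fun k (p : ℝ × E n) => f k p.1 p.2) (fun p => g p.1 p.2) atTop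
      {p | p.1 ≤ T} := by
  obtain ⟨A, hA⟩ := hg T
  refine Metric.tendstoUniformlyOn_iff.2 fun ε hε => ?_
  filter_upwards [(tendsto_const_mul_half_pow A).eventually_lt_const hε] with k hk p hp
  rw [dist_comm, Real.dist_eq]
  exact (expBdd_zero_iff.1 (hA k).expBdd p.1 hp p.2).trans_lt hk

lemma GeomTendstoC.tendsto (hg : GeomTendstoC m f g) (t : ℝ) (x : E n) :
    Tendsto (fun k => f k t x) atTop (𝓝 (g t x)) :=
  (hg.tendstoUniformlyOn t).tendsto_at (x := (t, x)) (le_refl t)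

lemma GeomTendstoC.shift (hg : GeomTendstoC m f g) : GeomTendstoC m (fun k => f (k + 1)) g :=
  fun T => by
    obtain ⟨A, hA⟩ := hg T
    exact ⟨A * (1 / 2), fun k => by simpa only [pow_succ', mul_assoc] using hA (k + 1)⟩

lemma GeomTendstoC.slabBdd (hf : ∀ k, SlabBdd (f k)) (hg : GeomTendstoC m f g) : SlabBdd g := by
  refine ⟨continuous_iff_continuousAt.2 fun p => ?_, fun T => ?_⟩
  · have hon := (hg.tendstoUniformlyOn (p.1 + 1)).continuousOn
      (.of_forall fun k => (hf k).continuous.continuousOn)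
    exact hon.continuousAt ((isOpen_lt continuous_fst continuous_const).mem_nhds
      (lt_add_one p.1) |> mem_of_superset <| fun _ hq => le_of_lt hq)
  · obtain ⟨A, hA⟩ := hg T
    obtain ⟨C, hC⟩ := (hf 0).exists_abs_le T
    refine ⟨C + A * (1 / 2) ^ 0, fun t ht x => ?_⟩
    have hclose := expBdd_zero_iff.1 (hA 0).expBdd t ht x
    simpa only [sub_sub_cancel] using (abs_sub (f 0 t x) _).trans (add_le_add (hC t ht x) hclose)

lemma GeomTendstoC.hasFDerivAt {p : Fin n → ℝ → E n → ℝ} (hf : ∀ k t, Differentiable ℝ (f k t))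
    (hg : GeomTendstoC 0 f g) (hp : ∀ j, GeomTendstoC m (fun k t => pd (f k t) j) (p j)) (t : ℝ)
    (x : E n) : HasFDerivAt (g t) (∑ j, p j t x • (EuclideanSpace.proj j : E n →L[ℝ] ℝ)) x := by
  refine hasFDerivAt_of_tendstoUniformly (l := atTop) (f := fun k => f k t)
    (f' := fun k x => ∑ j, pd (f k t) j x • (EuclideanSpace.proj j : E n →L[ℝ] ℝ))
    (g' := fun x => ∑ j, p j t x • (EuclideanSpace.proj j : E n →L[ℝ] ℝ)) ?_
    (fun k x => fderiv_eq_sum_pd (f k t) x ▸ (hf k t x).hasFDerivAt) (hg.tendsto t) x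
  choose A hA using fun j => hp j t
  refine Metric.tendstoUniformly_iff.2 fun ε hε => ?_
  filter_upwards [(tendsto_const_mul_half_pow (∑ j, A j)).eventually_lt_const hε] with k hk x
  refine lt_of_le_of_lt ?_ hk
  rw [dist_comm, dist_eq_norm, ← Finset.sum_sub_distrib, Finset.sum_mul]
  simp only [← sub_smul]
  exact (norm_sum_smul_proj_le _).trans
    (Finset.sum_le_sum fun j _ => expBdd_zero_iff.1 (hA j k).expBdd t le_rfl x)

lemma GeomCauchyC.exists_geomTendstoC_zero (hf : GeomCauchyC m f) : ∃ g, GeomTendstoC 0 f g := by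
  have hdist : ∀ T, ∃ A, ∀ t ≤ T, ∀ x k, dist (f k t x) (f (k + 1) t x) ≤ A * (1 / 2) ^ k :=
    fun T => by
      obtain ⟨A, hA⟩ := hf T
      refine ⟨A, fun t ht x k => ?_⟩
      rw [dist_comm, Real.dist_eq]
      exact expBdd_zero_iff.1 (hA k).expBdd t ht x
  have hlim : ∀ t x, ∃ a, Tendsto (fun k => f k t x) atTop (𝓝 a) := fun t x => by
    obtain ⟨A, hA⟩ := hdist t
    exact cauchySeq_tendsto_of_complete
      (cauchySeq_of_le_geometric (1 / 2) A (by norm_num) (hA t le_rfl x))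
  choose g hg using hlim
  refine ⟨g, fun T => ?_⟩
  obtain ⟨A, hA⟩ := hdist T
  refine ⟨2 * A, fun k => expBdd_zero_iff.2 fun t ht x => ?_⟩
  rw [← Real.dist_eq]
  refine (dist_le_of_le_geometric_of_tendsto (1 / 2) A (by norm_num) (hA t ht x) (hg t x)
    k).trans_eq ?_
  norm_num
  ring

lemma geomCauchyC_pd (hfs : ∀ k, SlabBddC (m + 1) (f k)) (hf : GeomCauchyC (m + 1) f)
    (j : Fin n) : GeomCauchyC m fun k t => pd (f k t) j := fun T => by
  obtain ⟨A, hA⟩ := hf T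
  refine ⟨A, fun k => ?_⟩
  have hsub : (fun t x => pd (f (k + 1) t) j x - pd (f k t) j x) =
      fun t => pd (fun x => f (k + 1) t x - f k t x) j := by
    ext t x
    exact (pd_sub ((hfs (k + 1)).differentiable t x) ((hfs k).differentiable t x) j).symm
  exact hsub ▸ expBddC_pd (hA k) j

lemma geomTendstoC_zero_iff : GeomTendstoC 0 f g ↔
    ∀ T, ∃ A, ∀ k, ∀ t ≤ T, ∀ x, |f k t x - g t x| ≤ A * (1 / 2) ^ k := by
  simp only [GeomTendstoC, ExpBddC, expBdd_zero_iff]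

lemma geomTendstoC_succ_iff (hf : ∀ k t, Differentiable ℝ (f k t))
    (hg : ∀ t, Differentiable ℝ (g t)) : GeomTendstoC (m + 1) f g ↔
      GeomTendstoC 0 f g ∧ ∀ j, GeomTendstoC m (fun k t => pd (f k t) j) fun t => pd (g t) j := by
  have hsub : ∀ k j, (fun t => pd (fun x => f k t x - g t x) j) =
      fun t x => pd (f k t) j x - pd (g t) j x := fun k j => by
    ext t x; exact pd_sub (hf k t x) (hg t x) j
  simp only [GeomTendstoC, ExpBddC, hsub]
  refine ⟨fun hfg => ⟨fun T => ?_, fun j T => ?_⟩, fun ⟨hfg, hpd⟩ T => ?_⟩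
  · obtain ⟨A, hA⟩ := hfg T
    exact ⟨A, fun k => (hA k).1⟩
  · obtain ⟨A, hA⟩ := hfg T
    exact ⟨A, fun k => (hA k).2 j⟩
  · obtain ⟨A, hA⟩ := hfg T
    choose D hD using fun j => hpd j T
    obtain ⟨B, hB⟩ := (finite_range D).bddAbove
    refine ⟨max A B, fun k => ⟨(hA k).mono ?_, fun j => (hD j k).mono ?_⟩⟩
    · gcongr; exact le_max_left A B
    · gcongr; exact (hB (mem_range_self j)).trans (le_max_right A B)

lemma exists_geomTendstoC (hfs : ∀ k, SlabBddC m (f k)) (hf : GeomCauchyC m f) :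
    ∃ g, SlabBddC m g ∧ GeomTendstoC m f g := by
  induction m generalizing f with
  | zero =>
    obtain ⟨g, hg⟩ := hf.exists_geomTendstoC_zero
    exact ⟨g, hg.slabBdd hfs, hg⟩
  | succ m ih =>
    obtain ⟨g, hg⟩ := hf.exists_geomTendstoC_zero
    choose p hps hp using fun j => ih (fun k => slabBddC_pd (hfs k) j) (geomCauchyC_pd hfs hf j)
    have hd := hg.hasFDerivAt (fun k => (hfs k).differentiable) hp
    have hpd : ∀ j t, pd (g t) j = p j t := fun j t =>
      funext fun x => pd_eq_of_hasFDerivAt (hd t x) j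
    have hdiff : ∀ t, Differentiable ℝ (g t) := fun t x => (hd t x).differentiableAt
    refine ⟨g, ⟨hg.slabBdd fun k => (hfs k).slabBdd, hdiff, ?_⟩,
      (geomTendstoC_succ_iff (fun k => (hfs k).differentiable) hdiff).2 ⟨hg, ?_⟩⟩
    · simpa only [hpd] using hps
    · simpa only [hpd] using hp

lemma GeomTendstoC.expBdd (hg : GeomTendstoC m f g) (hf : ∀ k, ExpBdd T lam B (f k)) :
    ExpBdd T lam B g := fun t ht x =>
  le_of_tendsto (hg.tendsto t x).abs (.of_forall fun k => hf k t ht x)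

lemma GeomTendstoC.add {f' : ℕ → ℝ → E n → ℝ} {g' : ℝ → E n → ℝ} (hg : GeomTendstoC 0 f g)
    (hg' : GeomTendstoC 0 f' g') :
    GeomTendstoC 0 (fun k t x => f k t x + f' k t x) fun t x => g t x + g' t x := fun T => by
  obtain ⟨A, hA⟩ := hg T
  obtain ⟨A', hA'⟩ := hg' T
  refine ⟨A + A', fun k => ?_⟩
  simpa only [add_sub_add_comm, add_mul, ExpBddC] using (hA k).expBdd.add (hA' k).expBdd

lemma GeomTendstoC.const_mul (hg : GeomTendstoC 0 f g) (c : ℝ) :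
    GeomTendstoC 0 (fun k t x => c * f k t x) fun t x => c * g t x := by
  rw [geomTendstoC_zero_iff] at hg ⊢
  intro T
  obtain ⟨A, hA⟩ := hg T
  refine ⟨|c| * A, fun k t ht x => ?_⟩
  rw [← mul_sub, abs_mul, mul_assoc]
  exact mul_le_mul_of_nonneg_left (hA k t ht x) (abs_nonneg c)

lemma GeomTendstoC.sum {f : Fin n → ℕ → ℝ → E n → ℝ} {g : Fin n → ℝ → E n → ℝ}
    (hg : ∀ j, GeomTendstoC 0 (f j) (g j)) :
    GeomTendstoC 0 (fun k t x => ∑ j, f j k t x) fun t x => ∑ j, g j t x := fun T => by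
  choose A hA using fun j => hg j T
  refine ⟨∑ j, A j, fun k => expBdd_zero_iff.2 fun t ht x => ?_⟩
  rw [← Finset.sum_sub_distrib, Finset.sum_mul]
  exact (Finset.abs_sum_le_sum_abs _ _).trans
    (Finset.sum_le_sum fun j _ => expBdd_zero_iff.1 (hA j k).expBdd t ht x)

lemma GeomTendstoC.hasDerivAt {f' : ℕ → ℝ → E n → ℝ} {g' : ℝ → E n → ℝ} {t : ℝ} {x : E n}
    (hg : GeomTendstoC m f g) (hg' : GeomTendstoC 0 f' g')
    (hf : ∀ k, ∀ s > 0, HasDerivAt (fun s => f k s x) (f' k s x) s) (ht : 0 < t) :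
    HasDerivAt (fun s => g s x) (g' t x) t := by
  have hunif : TendstoUniformlyOn (fun k s => f' k s x) (fun s => g' s x) atTop
      (Ioo 0 (t + 1)) :=
    ((hg'.tendstoUniformlyOn (t + 1)).comp fun s => (s, x)).mono fun s hs => hs.2.le
  exact hasDerivAt_of_tendstoUniformlyOn isOpen_Ioo hunif
    (.of_forall fun k s hs => hf k s hs.1) (fun s _ => hg.tendsto s x) ⟨ht, lt_add_one t⟩

end Convergence

section TransportSolution

variable {n : ℕ} {ν T L G K H : ℝ} {χ : ℝ → ℝ} {h : Fin n → E n → ℝ}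
  {u : Fin n → ℝ → E n → ℝ} {v : ℕ → Fin n → ℝ → E n → ℝ}

/-- A bounded `C²` solution `u` of `∂uᵢ/∂t = νΔuᵢ + ∑ⱼ χ(uⱼ) ∂ⱼuᵢ` with initial data `h`, continued
by `h` to negative times. -/
structure IsTransportSolution (ν : ℝ) (χ : ℝ → ℝ) (h : Fin n → E n → ℝ)
    (u : Fin n → ℝ → E n → ℝ) : Prop where
  slabBddC : ∀ i, SlabBddC 2 (u i)
  of_nonpos : ∀ i, ∀ t ≤ 0, u i t = h i
  hasDerivAt : ∀ i, ∀ t > 0, ∀ x, HasDerivAt (fun s => u i s x)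
    (ν * ∑ j, pd (pd (u i t) j) j x + transport χ u i t x) t

lemma GeomTendstoC.transport (hχ : C2Bdd χ L) (hvs : ∀ k i, SlabBddC 2 (v k i))
    (hus : ∀ i, SlabBddC 2 (u i)) (hvu : ∀ i, GeomTendstoC 2 (fun k => v k i) (u i))
    (hG : ∀ T, ∃ G, 0 ≤ G ∧ (∀ k i j, ExpBddC 1 T 0 G fun t => pd (v k i t) j) ∧
      ∀ i j, ExpBddC 1 T 0 G fun t => pd (u i t) j) (i : Fin n) :
    GeomTendstoC 0 (fun k => transport χ (v k) i) (transport χ u i) := fun T => by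
  obtain ⟨G, hG0, hGv, hGu⟩ := hG T
  choose A hA using fun i => hvu i T
  obtain ⟨B, hB⟩ := (finite_range A).bddAbove
  refine ⟨n * (2 * L * (G + 1) ^ 2) * B, fun k => ?_⟩
  rw [mul_assoc _ B]
  refine (expBddC_transport_sub_transport hχ (hvs k) hus hG0 (hGv k)
    (fun i j => (hGu i j).expBdd) (fun i => (hA i k).mono ?_) i).expBdd
  gcongr
  exact hB (mem_range_self i)

lemma geomCauchyC_picardIter (hν : 0 < ν) (hχ : C2Bdd χ L) (hh : ∀ m i, SlabBddC m fun _ => h i)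
    (hK : 0 ≤ K) (hH : 0 ≤ H) (hb : ∀ T k, DerivBound T K H (picardIter ν χ h k)) (i : Fin n) :
    GeomCauchyC 2 fun k => picardIter ν χ h k i := fun T => by
  obtain ⟨G, hG0, hG⟩ := exists_forall_expBddC_pd (n := n) T hK hH
  obtain ⟨A, hA⟩ := exists_expBddC_picardIter_sub hν hχ hh hG0 fun k => hG _ (hb T k)
  exact ⟨A, fun k => hA k i⟩

lemma GeomTendstoC.derivBound (hvs : ∀ k i, SlabBddC 2 (v k i)) (hus : ∀ i, SlabBddC 2 (u i))
    (hvu : ∀ i, GeomTendstoC 2 (fun k => v k i) (u i)) (hb : ∀ k, DerivBound T K H (v k)) :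
    DerivBound T K H u := by
  have hpd : ∀ i j, GeomTendstoC 1 (fun k t => pd (v k i t) j) fun t => pd (u i t) j := fun i =>
    ((geomTendstoC_succ_iff (fun k => (hvs k i).differentiable) (hus i).differentiable).1
      (hvu i)).2
  refine ⟨fun i j => (hpd i j).expBdd fun k => (hb k).first i j, fun i j k => ?_⟩
  exact (((geomTendstoC_succ_iff (fun l => (slabBddC_pd (hvs l i) j).differentiable)
    (slabBddC_pd (hus i) j).differentiable).1 (hpd i j)).2 k).expBdd fun l => (hb l).second i j k

lemma isTransportSolution_of_geomTendstoC (hν : 0 < ν) (hχ : C2Bdd χ L)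
    (hh : ∀ m i, SlabBddC m fun _ => h i) (hK : 0 ≤ K) (hH : 0 ≤ H)
    (hb : ∀ T k, DerivBound T K H (picardIter ν χ h k)) (hb' : ∀ T, DerivBound T K H u)
    (hus : ∀ i, SlabBddC 2 (u i))
    (hu : ∀ i, GeomTendstoC 2 (fun k => picardIter ν χ h k i) (u i)) :
    IsTransportSolution ν χ h u := by
  have hs := slabBddC_picardIter (ν := ν) hχ hh
  refine ⟨hus, fun i t ht => funext fun x => ?_, fun i t ht x => ?_⟩
  · refine tendsto_nhds_unique ((hu i).tendsto t x) ?_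
    simp only [picardIter_of_nonpos hν.le _ i ht, tendsto_const_nhds]
  · have hpd : ∀ j, GeomTendstoC 1 (fun k t => pd (picardIter ν χ h k i t) j)
        fun t => pd (u i t) j :=
      ((geomTendstoC_succ_iff (fun k => (hs k 1 i).differentiable) (hus i).differentiable).1
        (hu i)).2
    have hpd' : ∀ j, GeomTendstoC 0 (fun k t => pd (pd (picardIter ν χ h k i t) j) j)
        fun t => pd (pd (u i t) j) j := fun j =>
      ((geomTendstoC_succ_iff (fun k => (slabBddC_pd (hs k 2 i) j).differentiable)
        (slabBddC_pd (hus i) j).differentiable).1 (hpd j)).2 j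
    have htransport := GeomTendstoC.transport hχ (fun k => hs k 2) hus hu (fun T => by
      obtain ⟨G, hG0, hG⟩ := exists_forall_expBddC_pd (n := n) T hK hH
      exact ⟨G, hG0, fun k => hG _ (hb T k), hG _ (hb' T)⟩) i
    have hrhs := ((GeomTendstoC.sum fun j => (hpd' j).shift).const_mul ν).add htransport
    exact (hu i).shift.hasDerivAt hrhs (fun k s hs' => hasDerivAt_mildSolution hν (hh 2 i)
      (slabBddC_transport hχ (hs k 3) i) hs' x) ht

lemma exists_isTransportSolution (hν : 0 < ν) (hχ : C2Bdd χ L)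
    (hh : ∀ m i, SlabBddC m fun _ => h i) (hK : 0 < K)
    (hsmooth : smoothing n ν K * (n * L) ≤ 1 / 2)
    (hsmooth' : smoothing n ν (2 * K) * (n * L) ≤ 1 / 2) (hH0 : 0 ≤ H)
    (hH : ∀ i j x, |pd (h i) j x| ≤ H) (hH' : ∀ i j k x, |pd (pd (h i) j) k x| ≤ H) :
    ∃ u, IsTransportSolution ν χ h u ∧ ∀ T, DerivBound T K H u := by
  have hb := fun T k =>
    derivBound_picardIter (T := T) hν hχ hh hK hsmooth hsmooth' hH hH' k
  have hs := slabBddC_picardIter (ν := ν) hχ hh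
  choose u hus hu using fun i => exists_geomTendstoC (fun k => hs k 2 i)
    (geomCauchyC_picardIter hν hχ hh hK.le hH0 hb i)
  have hb' := fun T => GeomTendstoC.derivBound (fun k => hs k 2) hus hu (hb T)
  exact ⟨u, isTransportSolution_of_geomTendstoC hν hχ hh hK.le hH0 hb hb' hus hu, hb'⟩

end TransportSolution

section Cutoff

lemma exists_c2Bdd_of_hasCompactSupport {χ : ℝ → ℝ} (hχ : ContDiff ℝ (⊤ : ℕ∞) χ)
    (hsupp : HasCompactSupport χ) : ∃ L, C2Bdd χ L := by
  have hχ₁ : ContDiff ℝ (⊤ : ℕ∞) (deriv χ) := (contDiff_infty_iff_deriv.1 hχ).2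
  have hχ₂ : ContDiff ℝ (⊤ : ℕ∞) (deriv (deriv χ)) := (contDiff_infty_iff_deriv.1 hχ₁).2
  obtain ⟨L₀, hL₀⟩ := hsupp.exists_bound_of_continuous hχ.continuous
  obtain ⟨L₁, hL₁⟩ := hsupp.deriv.exists_bound_of_continuous hχ₁.continuous
  obtain ⟨L₂, hL₂⟩ := hsupp.deriv.deriv.exists_bound_of_continuous hχ₂.continuous
  exact ⟨max L₀ (max L₁ L₂), hχ, fun s => le_max_of_le_left (hL₀ s),
    fun s => le_max_of_le_right (le_max_of_le_left (hL₁ s)),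
    fun s => le_max_of_le_right (le_max_of_le_right (hL₂ s))⟩

lemma exists_c2Bdd_eq_neg {M : ℝ} (hM : 0 ≤ M) :
    ∃ χ L, C2Bdd χ L ∧ ∀ s, |s| ≤ M → χ s = -s := by
  let b : ContDiffBump (0 : ℝ) := ⟨M + 1, M + 2, by linarith, by linarith⟩
  obtain ⟨L, hL⟩ := exists_c2Bdd_of_hasCompactSupport (χ := fun s => -s * b s)
    (contDiff_neg.mul b.contDiff) b.hasCompactSupport.mul_left
  refine ⟨_, L, hL, fun s hs => ?_⟩
  have hb : b s = 1 := b.one_of_mem_closedBall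
    (mem_closedBall_zero_iff.2 (hs.trans (le_add_of_nonneg_right zero_le_one)))
  rw [hb, mul_one]

end Cutoff

section MaximumPrinciple

open Topology

variable {n : ℕ} {ν L M A : ℝ} {f : E n → ℝ} {x : E n} {b : Fin n → ℝ → E n → ℝ}

lemma pd_eq_zero_of_isLocalMax (hmax : IsLocalMax f x) (j : Fin n) : pd f j x = 0 := by
  rw [pd, hmax.fderiv_eq_zero, zero_apply]

lemma nonpos_of_isLocalMax_of_hasDerivAt {g g' : ℝ → ℝ} {g'' a : ℝ} (hmax : IsLocalMax g a)
    (hg : ∀ s, HasDerivAt g (g' s) s) (hg' : HasDerivAt g' g'' a) : g'' ≤ 0 := by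
  obtain rfl : deriv g = g' := funext fun s => (hg s).deriv
  by_contra! hpos
  have hmin : IsLocalMin g a :=
    isLocalMin_of_deriv_deriv_pos (hg'.deriv ▸ hpos) hmax.deriv_eq_zero (hg a).continuousAt
  have hconst : g =ᶠ[𝓝 a] fun _ => g a := by
    filter_upwards [hmax, hmin] with s hle hge using le_antisymm hle hge
  have hzero : deriv (deriv g) a = 0 := by
    rw [hconst.deriv.deriv_eq, deriv_const', deriv_const]
  exact hpos.ne' (hg'.deriv ▸ hzero)

lemma hasDerivAt_comp_add_smul_single (hf : Differentiable ℝ f) (x : E n) (j : Fin n) (s : ℝ) :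
    HasDerivAt (fun s : ℝ => f (x + s • EuclideanSpace.single j 1))
      (pd f j (x + s • EuclideanSpace.single j 1)) s := by
  have hline : HasDerivAt (fun s : ℝ => x + s • EuclideanSpace.single j (1 : ℝ))
      (EuclideanSpace.single j 1) s := by
    have := ((hasDerivAt_id s).smul_const (EuclideanSpace.single j (1 : ℝ))).const_add x
    rwa [one_smul] at this
  exact (hf _).hasFDerivAt.comp_hasDerivAt s hline

lemma pd_pd_nonpos_of_isLocalMax {j : Fin n} (hf : Differentiable ℝ f)
    (hf' : Differentiable ℝ (pd f j)) (hmax : IsLocalMax f x) : pd (pd f j) j x ≤ 0 := by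
  refine nonpos_of_isLocalMax_of_hasDerivAt (a := 0) ?_ (hasDerivAt_comp_add_smul_single hf x j)
    (by simpa only [zero_smul, add_zero] using hasDerivAt_comp_add_smul_single hf' x j 0)
  have hline : Tendsto (fun s : ℝ => x + s • EuclideanSpace.single j (1 : ℝ)) (𝓝 0) (𝓝 x) :=
    Continuous.tendsto' (by fun_prop) _ _ (by simp)
  filter_upwards [hline.eventually hmax] with s hs
  simpa only [zero_smul, add_zero] using hs

lemma nonneg_of_hasDerivAt_of_forall_le {g : ℝ → ℝ} {g' a t : ℝ} (hat : a < t)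
    (hg : HasDerivAt g g' t) (hle : ∀ s ∈ Icc a t, g s ≤ g t) : 0 ≤ g' := by
  have hslope : Tendsto (slope g t) (𝓝[<] t) (𝓝 g') :=
    (hasDerivAt_iff_tendsto_slope.1 hg).mono_left (nhdsWithin_mono t fun _ hs => ne_of_lt hs)
  refine ge_of_tendsto hslope ?_
  filter_upwards [Ioo_mem_nhdsLT hat] with s hs
  rw [slope_def_field]
  exact div_nonneg_of_nonpos (sub_nonpos.2 (hle s ⟨hs.1.le, hs.2.le⟩)) (sub_nonpos.2 hs.2.le)

lemma nonpos_of_strict_subsolution {φ φ' : ℝ → E n → ℝ} {T R : ℝ} (hν : 0 ≤ ν)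
    (hφ : Continuous fun p : ℝ × E n => φ p.1 p.2) (hd : ∀ t, Differentiable ℝ (φ t))
    (hd' : ∀ t j, Differentiable ℝ (pd (φ t) j)) (h0 : ∀ x, φ 0 x ≤ 0)
    (hderiv : ∀ t > 0, ∀ x, HasDerivAt (fun s => φ s x) (φ' t x) t)
    (hlt : ∀ t > 0, ∀ x,
      φ' t x < ν * ∑ j, pd (pd (φ t) j) j x + ∑ j, b j t x * pd (φ t) j x)
    (hR : ∀ t ∈ Icc 0 T, ∀ x, R < ‖x‖ → φ t x ≤ 0) :
    ∀ t ∈ Icc 0 T, ∀ x, φ t x ≤ 0 := by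
  intro t ht x
  by_contra! hpos
  have hmem : ∀ {s y}, s ∈ Icc 0 T → ‖y‖ ≤ R → (s, y) ∈ Icc 0 T ×ˢ Metric.closedBall (0 : E n) R :=
    fun hs hy => ⟨hs, mem_closedBall_zero_iff.2 hy⟩
  have hx : ‖x‖ ≤ R := not_lt.1 fun hx => (hR t ht x hx).not_gt hpos
  obtain ⟨⟨t₀, x₀⟩, ⟨ht₀, -⟩, hmax⟩ := (isCompact_Icc.prod
    (isCompact_closedBall (0 : E n) R)).exists_isMaxOn ⟨(t, x), hmem ht hx⟩ hφ.continuousOn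
  have hval : 0 < φ t₀ x₀ := hpos.trans_le (hmax (hmem ht hx))
  have hle : ∀ s ∈ Icc 0 T, ∀ y, φ s y ≤ φ t₀ x₀ := fun s hs y =>
    (le_or_gt ‖y‖ R).elim (fun hy => hmax (hmem hs hy)) fun hy => (hR s hs y hy).trans hval.le
  have ht₀_pos : 0 < t₀ := ht₀.1.lt_of_ne (by rintro rfl; exact (h0 x₀).not_gt hval)
  have hspace : IsLocalMax (φ t₀) x₀ := .of_forall (hle t₀ ht₀)
  have htime : 0 ≤ φ' t₀ x₀ := nonneg_of_hasDerivAt_of_forall_le ht₀_pos (hderiv t₀ ht₀_pos x₀)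
    fun s hs => hle s ⟨hs.1, hs.2.trans ht₀.2⟩ x₀
  have hlaplace : ∑ j, pd (pd (φ t₀) j) j x₀ ≤ 0 :=
    Finset.sum_nonpos fun j _ => pd_pd_nonpos_of_isLocalMax (hd t₀) (hd' t₀ j) hspace
  have hdrift : ∑ j, b j t₀ x₀ * pd (φ t₀) j x₀ = 0 :=
    Finset.sum_eq_zero fun j _ => by rw [pd_eq_zero_of_isLocalMax hspace, mul_zero]
  linarith [hlt t₀ ht₀_pos x₀, mul_nonpos_of_nonneg_of_nonpos hν hlaplace]

/-- For `A` large, a strict supersolution of the convection-diffusion equation that grows at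
infinity. -/
def barrier (A t : ℝ) (x : E n) : ℝ :=
  Real.exp (A * t) * (1 + ‖x‖ ^ 2)

lemma differentiable_barrier (A t : ℝ) : Differentiable ℝ (barrier A t : E n → ℝ) :=
  ((contDiff_norm_sq ℝ).differentiable one_ne_zero).const_add 1 |>.const_mul _

lemma pd_barrier (A t : ℝ) (j : Fin n) :
    pd (barrier A t) j = fun x => 2 * Real.exp (A * t) * x j := by
  ext x
  have hd : HasFDerivAt (barrier A t) (Real.exp (A * t) • 2 • innerSL ℝ x) x :=
    ((hasStrictFDerivAt_norm_sq x).hasFDerivAt.const_add 1).const_mul _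
  rw [pd, hd.fderiv]
  simp [EuclideanSpace.inner_single_right]
  ring

lemma differentiable_pd_barrier (A t : ℝ) (j : Fin n) : Differentiable ℝ (pd (barrier A t) j) := by
  rw [pd_barrier]
  exact (EuclideanSpace.proj j : E n →L[ℝ] ℝ).differentiable.const_mul _

lemma pd_pd_barrier (A t : ℝ) (j : Fin n) (x : E n) :
    pd (pd (barrier A t) j) j x = 2 * Real.exp (A * t) := by
  have hd : HasFDerivAt (fun x : E n => 2 * Real.exp (A * t) * x j)
      ((2 * Real.exp (A * t)) • (EuclideanSpace.proj j : E n →L[ℝ] ℝ)) x :=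
    (EuclideanSpace.proj j : E n →L[ℝ] ℝ).hasFDerivAt.const_mul _
  rw [pd_barrier, pd, hd.fderiv]
  simp

lemma hasDerivAt_barrier (A t : ℝ) (x : E n) :
    HasDerivAt (fun s => barrier A s x) (A * barrier A t x) t := by
  convert! (((hasDerivAt_id t).const_mul A).exp).mul_const (1 + ‖x‖ ^ 2) using 1
  simp only [barrier, id, mul_one]
  ring

lemma norm_le_barrier {t : ℝ} (hA : 0 ≤ A) (ht : 0 ≤ t) (x : E n) : ‖x‖ ≤ barrier A t x := by
  have hexp : 1 ≤ Real.exp (A * t) := Real.one_le_exp (mul_nonneg hA ht)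
  calc ‖x‖ ≤ 1 + ‖x‖ ^ 2 := by nlinarith [sq_nonneg (‖x‖ - 1)]
    _ ≤ barrier A t x := le_mul_of_one_le_left (by positivity) hexp

lemma barrier_supersolution (hν : 0 ≤ ν) (hb : ∀ j t x, |b j t x| ≤ L) (hL : 0 ≤ L)
    (hA : 2 * ν * n + n * L < A) (t : ℝ) (x : E n) :
    ν * ∑ j, pd (pd (barrier A t) j) j x + ∑ j, b j t x * pd (barrier A t) j x <
      A * barrier A t x := by
  set e := Real.exp (A * t)
  have he : 0 < e := Real.exp_pos _
  have hlaplace : ∑ j : Fin n, pd (pd (barrier A t) j) j x = n * (2 * e) := by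
    simp only [pd_pd_barrier, Finset.sum_const, Finset.card_univ, Fintype.card_fin, nsmul_eq_mul, e]
  have hdrift : ∑ j, b j t x * pd (barrier A t) j x ≤ n * (L * (e * (1 + ‖x‖ ^ 2))) := by
    have hterm : ∀ j, b j t x * pd (barrier A t) j x ≤ L * (e * (1 + ‖x‖ ^ 2)) := fun j => by
      have hcoord : 2 * |x j| ≤ 1 + ‖x‖ ^ 2 := by
        nlinarith [sq_nonneg (‖x‖ - 1), abs_coord_le_norm x j]
      refine (le_abs_self _).trans ?_
      rw [pd_barrier, abs_mul, abs_mul, abs_of_pos (show 0 < 2 * e by positivity)]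
      refine mul_le_mul (hb j t x) ?_ (by positivity) hL
      linarith [mul_le_mul_of_nonneg_left hcoord he.le]
    exact (Finset.sum_le_sum fun j _ => hterm j).trans_eq (by simp)
  have hgrow : n * (2 * e) ≤ n * 2 * (e * (1 + ‖x‖ ^ 2)) := by
    nlinarith [show 0 ≤ n * (2 * e) * ‖x‖ ^ 2 by positivity]
  calc _ ≤ ν * (n * 2 * (e * (1 + ‖x‖ ^ 2))) + n * (L * (e * (1 + ‖x‖ ^ 2))) := by
        rw [hlaplace]; gcongr
    _ = (2 * ν * n + n * L) * (e * (1 + ‖x‖ ^ 2)) := by ring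
    _ < A * (e * (1 + ‖x‖ ^ 2)) := by gcongr

lemma barrier_pos (A t : ℝ) (x : E n) : 0 < barrier A t x := by
  unfold barrier; positivity

lemma pd_sub_const_sub_barrier {g : E n → ℝ} (hg : Differentiable ℝ g) (M ε A t : ℝ) (j : Fin n) :
    pd (fun x => g x - M - ε * barrier A t x) j = fun x => pd g j x - ε * pd (barrier A t) j x := by
  ext x
  have hbar := differentiable_barrier (n := n) A t x
  rw [pd_sub ((hg x).sub_const M) (hbar.const_mul ε), pd_sub (hg x) (differentiableAt_const M),
    pd_const, pd_const_mul hbar, sub_zero]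

lemma pd_pd_sub_const_sub_barrier {g : E n → ℝ} {j : Fin n} (hg : Differentiable ℝ g)
    (hg' : Differentiable ℝ (pd g j)) (M ε A t : ℝ) (x : E n) :
    pd (pd (fun x => g x - M - ε * barrier A t x) j) j x =
      pd (pd g j) j x - ε * pd (pd (barrier A t) j) j x := by
  have hbar := differentiable_pd_barrier A t j x
  rw [pd_sub_const_sub_barrier hg, pd_sub (hg' x) (hbar.const_mul ε), pd_const_mul hbar]

lemma sub_const_sub_barrier_nonpos (hν : 0 < ν) {w : ℝ → E n → ℝ} (hw : SlabBddC 2 w)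
    (hb : ∀ j t x, |b j t x| ≤ L) (hL : 0 ≤ L) (h0 : ∀ x, w 0 x ≤ M)
    (hpde : ∀ t > 0, ∀ x, HasDerivAt (fun s => w s x)
      (ν * ∑ j, pd (pd (w t) j) j x + ∑ j, b j t x * pd (w t) j x) t)
    (hA : 2 * ν * n + n * L < A) {ε : ℝ} (hε : 0 < ε) {T : ℝ} :
    ∀ t ∈ Icc 0 T, ∀ x, w t x - M - ε * barrier A t x ≤ 0 := by
  have hA0 : 0 ≤ A := le_trans (by positivity) hA.le
  obtain ⟨C, hC⟩ := hw.slabBdd.exists_abs_le T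
  have hpd := fun t => pd_sub_const_sub_barrier (hw.differentiable t) M ε A t
  have hw' := fun j => (slabBddC_pd hw j).differentiable
  refine nonpos_of_strict_subsolution hν.le (b := b) (R := (C - M) / ε) ?_ (fun t => ?_)
    (fun t j => ?_) (fun x => ?_)
    (fun t ht x => ((hpde t ht x).sub_const M).sub ((hasDerivAt_barrier A t x).const_mul ε))
    (fun t _ x => ?_) (fun t ht x hx => ?_)
  · have := hw.slabBdd.continuous
    unfold barrier
    fun_prop
  · exact ((hw.differentiable t).sub_const M).sub ((differentiable_barrier A t).const_mul ε)
  · exact hpd t j ▸ (hw' j t).sub ((differentiable_pd_barrier A t j).const_mul ε)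
  · linarith [h0 x, mul_pos hε (barrier_pos A 0 x)]
  · have hsuper := mul_lt_mul_of_pos_left (barrier_supersolution hν.le hb hL hA t x) hε
    simp only [fun j => pd_pd_sub_const_sub_barrier (hw.differentiable t) (hw' j t) M ε A t]
    simp only [hpd, mul_sub, Finset.sum_sub_distrib, mul_left_comm _ ε, ← Finset.mul_sum]
    linarith
  · have hgrow := mul_le_mul_of_nonneg_left (norm_le_barrier hA0 ht.1 x) hε.le
    rw [div_lt_iff₀' hε] at hx
    linarith [le_of_abs_le (hC t ht.2 x)]

theorem maximum_principle (hν : 0 < ν) {w : ℝ → E n → ℝ} (hw : SlabBddC 2 w)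
    (hb : ∀ j t x, |b j t x| ≤ L) (hL : 0 ≤ L) (h0 : ∀ x, w 0 x ≤ M)
    (hpde : ∀ t > 0, ∀ x, HasDerivAt (fun s => w s x)
      (ν * ∑ j, pd (pd (w t) j) j x + ∑ j, b j t x * pd (w t) j x) t)
    {t : ℝ} (ht : 0 ≤ t) (x : E n) : w t x ≤ M := by
  refine le_of_forall_pos_le_add fun δ hδ => ?_
  set A := 2 * ν * n + n * L + 1
  have hbar := barrier_pos A t x
  have hle := sub_const_sub_barrier_nonpos hν hw hb hL h0 hpde (lt_add_one _)
    (div_pos hδ hbar) t ⟨ht, le_rfl⟩ x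
  rw [div_mul_cancel₀ _ hbar.ne'] at hle
  linarith

end MaximumPrinciple

section AprioriBound

variable {n : ℕ} {ν L M : ℝ} {χ : ℝ → ℝ} {h : Fin n → E n → ℝ} {u : Fin n → ℝ → E n → ℝ}

lemma IsTransportSolution.abs_le (hν : 0 < ν) (hχ : C2Bdd χ L) (hu : IsTransportSolution ν χ h u)
    (hM : ∀ i x, |h i x| ≤ M) (i : Fin n) {t : ℝ} (ht : 0 ≤ t) (x : E n) : |u i t x| ≤ M := by
  have hus := hu.slabBddC i
  have hsign : ∀ c : ℝ, |c| = 1 → c * u i t x ≤ M := fun c hc => by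
    have hpd : ∀ t j, pd (fun x => c * u i t x) j = fun x => c * pd (u i t) j x := fun t j =>
      funext fun x => pd_const_mul (hus.differentiable t x) c j
    have hpd' : ∀ t j, pd (fun x => c * pd (u i t) j x) j = fun x => c * pd (pd (u i t) j) j x :=
      fun t j => funext fun x => pd_const_mul ((slabBddC_pd hus j).differentiable t x) c j
    refine maximum_principle hν ((slabBddC_const 2 c).mul hus) (b := fun j t x => χ (u j t x))
      (fun j t x => hχ.abs_le _) hχ.nonneg (fun x => ?_) (fun t ht x => ?_) ht x
    · rw [hu.of_nonpos i 0 le_rfl]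
      calc c * h i x ≤ |c * h i x| := le_abs_self _
        _ ≤ M := by rw [abs_mul, hc, one_mul]; exact hM i x
    · simp only [hpd, hpd', mul_left_comm _ c, ← Finset.mul_sum, ← mul_add]
      exact (hu.hasDerivAt i t ht x).const_mul c
  exact abs_le'.2 ⟨by simpa using hsign 1 abs_one, by simpa using hsign (-1) (by simp)⟩

end AprioriBound

section Continuation

lemma hasDerivAt_add_min_mul {f f' : ℝ → ℝ} (hf : Continuous f)
    (hderiv : ∀ t > 0, HasDerivAt f (f' t) t) (hf' : ContinuousAt f' 0)
    (hconst : ∀ t ≤ 0, f t = f 0) {t : ℝ} (ht : 0 ≤ t) :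
    HasDerivAt (fun s => f s + min s 0 * f' 0) (f' t) t := by
  rcases ht.eq_or_lt with rfl | hpos
  · have hright : HasDerivWithinAt f (f' 0) (Ici 0) 0 := by
      refine hasDerivWithinAt_Ici_of_tendsto_deriv
        (fun t ht => (hderiv t ht).differentiableAt.differentiableWithinAt)
        hf.continuousWithinAt self_mem_nhdsWithin ((hf'.mono_left nhdsWithin_le_nhds).congr' ?_)
      filter_upwards [self_mem_nhdsWithin] with t ht using (hderiv t ht).deriv.symm
    have hleft : HasDerivWithinAt (fun s => f 0 + s * f' 0) (f' 0) (Iic 0) 0 := by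
      simpa using (((hasDerivAt_id (0 : ℝ)).mul_const (f' 0)).const_add (f 0)).hasDerivWithinAt
    have hunion := (hleft.congr (fun s (hs : s ≤ 0) => by rw [hconst s hs, min_eq_left hs])
      (by simp)).union (hright.congr (f₁ := fun s => f s + min s 0 * f' 0)
        (fun s (hs : 0 ≤ s) => by simp [hs]) (by simp))
    rwa [Iic_union_Ici, hasDerivWithinAt_univ] at hunion
  · refine (hderiv t hpos).congr_of_eventuallyEq ?_
    filter_upwards [Ioi_mem_nhds hpos] with s hs
    simp [(show 0 < s from hs).le]

variable {n : ℕ} {ν : ℝ} {h : Fin n → E n → ℝ}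

/-- Continuation of `u` to negative times with slope `g`, for `u` constant in `t ≤ 0`. -/
def linearContinuation (u : ℝ → E n → ℝ) (g : E n → ℝ) (t : ℝ) (x : E n) : ℝ :=
  u t x + min t 0 * g x

lemma linearContinuation_of_nonneg {t : ℝ} (ht : 0 ≤ t) (u : ℝ → E n → ℝ) (g : E n → ℝ) :
    linearContinuation u g t = u t := by
  ext x
  simp [linearContinuation, ht]

/-- Global classical solutions of the viscous Burgers system with initial data `h`. The time
derivative is two-sided also at `t = 0`, where `norm12` evaluates it. -/
structure IsBurgersSolution (ν : ℝ) (h : Fin n → E n → ℝ) (u : Fin n → ℝ → E n → ℝ) : Prop where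
  continuousOn : ∀ i, ContinuousOn (fun p : ℝ × E n => u i p.1 p.2) (Ici 0 ×ˢ univ)
  differentiable : ∀ i, ∀ t ≥ 0, Differentiable ℝ (u i t)
  differentiable_pd : ∀ i, ∀ t ≥ 0, ∀ j, Differentiable ℝ (pd (u i t) j)
  continuous_pd : ∀ i, ∀ t ≥ 0, ∀ j, Continuous (pd (u i t) j)
  continuous_pd_pd : ∀ i, ∀ t ≥ 0, ∀ j k, Continuous (pd (pd (u i t) j) k)
  hasDerivAt : ∀ i, ∀ t ≥ 0, ∀ x, HasDerivAt (fun s => u i s x)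
    (ν * ∑ j, pd (pd (u i t) j) j x - ∑ j, u j t x * pd (u i t) j x) t
  initial : ∀ i, u i 0 = h i

lemma transport_eq_neg_sum {χ : ℝ → ℝ} {M : ℝ} (hχM : ∀ s, |s| ≤ M → χ s = -s)
    {u : Fin n → ℝ → E n → ℝ} {t : ℝ} {x : E n} (hu : ∀ j, |u j t x| ≤ M) (i : Fin n) :
    transport χ u i t x = -∑ j, u j t x * pd (u i t) j x := by
  simp only [transport, hχM _ (hu _), neg_mul, Finset.sum_neg_distrib]

variable {χ : ℝ → ℝ} {L : ℝ} {u : Fin n → ℝ → E n → ℝ}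

lemma IsTransportSolution.hasDerivAt_linearContinuation (hχ : C2Bdd χ L)
    (hu : IsTransportSolution ν χ h u) (i : Fin n) {t : ℝ} (ht : 0 ≤ t) (x : E n) :
    HasDerivAt (fun s => linearContinuation (u i)
      (fun x => ν * ∑ j, pd (pd (u i 0) j) j x + transport χ u i 0 x) s x)
      (ν * ∑ j, pd (pd (u i t) j) j x + transport χ u i t x) t := by
  have hpd := fun j => slabBddC_pd (slabBddC_pd (hu.slabBddC i) j) j
  have hrhs : SlabBddC 0 fun t x => ν * ∑ j, pd (pd (u i t) j) j x + transport χ u i t x :=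
    ((slabBddC_const 0 ν).mul (SlabBddC.sum _ hpd)).add
      (slabBddC_transport hχ (fun j => (hu.slabBddC j).of_succ) i)
  exact hasDerivAt_add_min_mul ((hu.slabBddC i).slabBdd.continuous_left x)
    (fun t ht => hu.hasDerivAt i t ht x) (hrhs.slabBdd.continuous_left x).continuousAt
    (fun t ht => by rw [hu.of_nonpos i t ht, hu.of_nonpos i 0 le_rfl]) ht

theorem IsTransportSolution.exists_isBurgersSolution (hν : 0 < ν) (hχ : C2Bdd χ L) {M : ℝ}
    (hχM : ∀ s, |s| ≤ M → χ s = -s) (hM : ∀ i x, |h i x| ≤ M)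
    (hu : IsTransportSolution ν χ h u) :
    ∃ v, IsBurgersSolution ν h v ∧ ∀ i, ∀ t ≥ 0, v i t = u i t := by
  set v := fun i => linearContinuation (u i)
    (fun x => ν * ∑ j, pd (pd (u i 0) j) j x + transport χ u i 0 x)
  have hvu : ∀ i, ∀ t ≥ 0, v i t = u i t := fun i t ht => linearContinuation_of_nonneg ht _ _
  have hpd := fun i j => slabBddC_pd (hu.slabBddC i) j
  refine ⟨v, ⟨fun i => ?_, fun i t ht => ?_, fun i t ht j => ?_, fun i t ht j => ?_,
    fun i t ht j k => ?_, fun i t ht x => ?_, fun i => ?_⟩, hvu⟩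
  · exact (hu.slabBddC i).slabBdd.continuous.continuousOn.congr fun p hp => by rw [hvu i _ hp.1]
  · exact hvu i t ht ▸ (hu.slabBddC i).differentiable t
  · exact hvu i t ht ▸ (hpd i j).differentiable t
  · exact hvu i t ht ▸ (hpd i j).slabBdd.continuous_right t
  · exact hvu i t ht ▸ (slabBddC_pd (hpd i j) k).slabBdd.continuous_right t
  · simp only [fun j => hvu j t ht]
    rw [sub_eq_add_neg, ← transport_eq_neg_sum hχM (fun j => hu.abs_le hν hχ hM j ht x) i]
    exact hu.hasDerivAt_linearContinuation hχ i ht x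
  · rw [hvu i 0 le_rfl, hu.of_nonpos i 0 le_rfl]

end Continuation

section NormBounds

variable {n : ℕ} {T : ℝ}

lemma sup0_le (hT : 0 ≤ T) {C : ℝ} {w : ℝ → E n → ℝ} (hw : ∀ t ∈ Icc 0 T, ∀ x, |w t x| ≤ C) :
    sup0 T w ≤ C := by
  have : Nonempty (Icc 0 T) := ⟨0, le_rfl, hT⟩
  exact ciSup_le fun t => ciSup_le fun x => hw t t.2 x

lemma sum_le_mul_of_forall_le {g : Fin n → ℝ} {C : ℝ} (hg : ∀ j, g j ≤ C) : ∑ j, g j ≤ n * C :=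
  (Finset.sum_le_sum fun j _ => hg j).trans (by simp)

variable {ν a b c d : ℝ}

lemma norm12_le_of_forall_abs_le (hT : 0 ≤ T) {w : ℝ → E n → ℝ}
    (hw : ∀ t ∈ Icc 0 T, ∀ x, |w t x| ≤ a)
    (hpd : ∀ j, ∀ t ∈ Icc 0 T, ∀ x, |pd (w t) j x| ≤ b)
    (htime : ∀ t ∈ Icc 0 T, ∀ x, |deriv (fun s => w s x) t| ≤ c)
    (hpd' : ∀ j k, ∀ t ∈ Icc 0 T, ∀ x, |pd (pd (w t) j) k x| ≤ d) :
    norm12 T w ≤ a + n * b + c + n * (n * d) :=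
  add_le_add (add_le_add (add_le_add (sup0_le hT hw)
    (sum_le_mul_of_forall_le fun j => sup0_le hT (hpd j))) (sup0_le hT htime))
    (sum_le_mul_of_forall_le fun j => sum_le_mul_of_forall_le fun k => sup0_le hT (hpd' j k))

variable {K H M : ℝ} {h : Fin n → E n → ℝ} {u v : Fin n → ℝ → E n → ℝ}

lemma IsBurgersSolution.norm12_le (hν : 0 ≤ ν) (hu : IsBurgersSolution ν h u) (hT : 0 ≤ T)
    (ha : ∀ i, ∀ t ∈ Icc 0 T, ∀ x, |u i t x| ≤ a)
    (hb : ∀ i j, ∀ t ∈ Icc 0 T, ∀ x, |pd (u i t) j x| ≤ b)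
    (hd : ∀ i j k, ∀ t ∈ Icc 0 T, ∀ x, |pd (pd (u i t) j) k x| ≤ d) (i : Fin n) :
    norm12 T (u i) ≤ a + n * b + (ν * (n * d) + n * (a * b)) + n * (n * d) := by
  refine norm12_le_of_forall_abs_le hT (ha i) (hb i) (fun t ht x => ?_) (hd i)
  rw [(hu.hasDerivAt i t ht.1 x).deriv]
  refine (abs_sub _ _).trans (add_le_add ?_ ?_)
  · rw [abs_mul, abs_of_nonneg hν]
    gcongr
    exact (Finset.abs_sum_le_sum_abs _ _).trans
      (sum_le_mul_of_forall_le fun j => hd i j j t ht x)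
  · refine (Finset.abs_sum_le_sum_abs _ _).trans (sum_le_mul_of_forall_le fun j => ?_)
    rw [abs_mul]
    exact mul_le_mul (ha j t ht x) (hb i j t ht x) (abs_nonneg _)
      ((abs_nonneg _).trans (ha j t ht x))

lemma ExpBdd.abs_le_of_mem_Icc {lam B t : ℝ} {f : ℝ → E n → ℝ} (hlam : 0 ≤ lam)
    (hf : ExpBdd T lam B f) (ht : t ∈ Icc 0 T) (x : E n) : |f t x| ≤ B * Real.exp (lam * T) := by
  have hzero := expBdd_zero_iff.1 (hf.zero_weight hlam) t ht.2 x
  rwa [max_eq_left (ht.1.trans ht.2)] at hzero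

lemma IsBurgersSolution.norm12_le_mul_exp (hν : 0 ≤ ν) (hK : 0 ≤ K) (hM : 0 ≤ M)
    (hv : IsBurgersSolution ν h v) (hvu : ∀ i, ∀ t ≥ 0, v i t = u i t)
    (huM : ∀ i, ∀ t ≥ 0, ∀ x, |u i t x| ≤ M) (hT : 0 ≤ T) (huH : DerivBound T K H u) (i : Fin n) :
    norm12 T (v i) ≤ (M + n * (2 * H) + (ν * (n * (4 * H ^ 2 + 2 * H)) + n * (M * (2 * H)))
      + n * (n * (4 * H ^ 2 + 2 * H))) * Real.exp (2 * K * T) := by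
  have hK' : 0 ≤ 2 * K := by positivity
  refine (hv.norm12_le hν hT (fun i t ht => hvu i t ht.1 ▸ huM i t ht.1)
    (fun i j t ht => hvu i t ht.1 ▸
      ((huH.first i j).mono_weight (by linarith)).abs_le_of_mem_Icc hK' ht)
    (fun i j k t ht => hvu i t ht.1 ▸ (huH.second i j k).abs_le_of_mem_Icc hK' ht) i).trans ?_
  have hexp : M ≤ M * Real.exp (2 * K * T) :=
    le_mul_of_one_le_right hM (Real.one_le_exp (by positivity))
  linarith

end NormBounds

section Existence

open Topology

lemma exists_forall_abs_le {ι α : Type*} [Finite ι] {f : ι → α → ℝ}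
    (hf : ∀ i, ∃ C, ∀ x, |f i x| ≤ C) : ∃ C, 0 ≤ C ∧ ∀ i x, |f i x| ≤ C := by
  choose D hD using hf
  obtain ⟨C, hC⟩ := (Set.finite_range D).bddAbove
  exact ⟨max 0 C, le_max_left _ _,
    fun i x => (hD i x).trans ((hC (mem_range_self i)).trans (le_max_right _ _))⟩

lemma exists_smoothing_mul_le (n : ℕ) (ν Q : ℝ) :
    ∃ K > 0, smoothing n ν K * Q ≤ 1 / 2 ∧ smoothing n ν (2 * K) * Q ≤ 1 / 2 := by
  have hlim : Tendsto (fun K => smoothing n ν K * Q) atTop (𝓝 0) := by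
    simpa only [zero_mul] using (tendsto_smoothing n ν).mul_const Q
  have hlim' := hlim.comp (tendsto_id.const_mul_atTop two_pos)
  exact ((eventually_gt_atTop 0).and ((hlim.eventually_le_const one_half_pos).and
    (hlim'.eventually_le_const one_half_pos))).exists

variable {n : ℕ} {ν : ℝ} {h : Fin n → E n → ℝ}

theorem exists_isBurgersSolution (hν : 0 < ν) (hh : ∀ m i, SlabBddC m fun _ => h i) :
    ∃ u, IsBurgersSolution ν h u ∧
      ∃ K B, 0 < K ∧ 0 ≤ B ∧ ∀ T ≥ 0, ∀ i, norm12 T (u i) ≤ B * Real.exp (2 * K * T) := by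
  have hpd := fun i j => slabBddC_pd (hh 2 i) j
  obtain ⟨M, hM, hhM⟩ := exists_forall_abs_le fun i => (hh 0 i).exists_abs_le_const
  obtain ⟨H₁, hH₁, hhH₁⟩ := exists_forall_abs_le fun p : Fin n × Fin n =>
    (hpd p.1 p.2).exists_abs_le_const
  obtain ⟨H₂, -, hhH₂⟩ := exists_forall_abs_le fun p : Fin n × Fin n × Fin n =>
    (slabBddC_pd (hpd p.1 p.2.1) p.2.2).exists_abs_le_const
  have hH : 0 ≤ max H₁ H₂ := le_max_of_le_left hH₁
  obtain ⟨χ, L, hχ, hχM⟩ := exists_c2Bdd_eq_neg hM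
  obtain ⟨K, hK, hsmooth, hsmooth'⟩ := exists_smoothing_mul_le n ν (n * L)
  obtain ⟨u, hu, huH⟩ := exists_isTransportSolution hν hχ hh hK hsmooth hsmooth' hH
    (fun i j x => le_max_of_le_left (hhH₁ (i, j) x))
    (fun i j k x => le_max_of_le_right (hhH₂ (i, j, k) x))
  obtain ⟨v, hv, hvu⟩ := hu.exists_isBurgersSolution hν hχ hχM hhM
  exact ⟨v, hv, K, _, hK, by positivity, fun T hT =>
    hv.norm12_le_mul_exp hν.le hK.le hM hvu (fun i t ht => hu.abs_le hν hχ hhM i ht) hT (huH T)⟩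

end Existence

section TimePartition

/-- The times `T_l = ρ₁ + ⋯ + ρ_l` with steps `ρ_k = 1 / (4c(C + k - 1))`. -/
def stepSum (c C : ℝ) (l : ℕ) : ℝ :=
  ∑ k ∈ Finset.Icc 1 l, 1 / (4 * c * (C + (k : ℝ) - 1))

variable {c C : ℝ} {l : ℕ}

lemma stepSum_nonneg (hc : 0 ≤ c) (hC : 0 ≤ C) (l : ℕ) : 0 ≤ stepSum c C l := by
  refine Finset.sum_nonneg fun k hk => ?_
  have hk : (1 : ℝ) ≤ k := mod_cast (Finset.mem_Icc.1 hk).1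
  have hCk : 0 ≤ C + (k : ℝ) - 1 := by linarith
  positivity

lemma harmonic_cast_eq_sum_Icc (l : ℕ) :
    ((harmonic l : ℚ) : ℝ) = ∑ k ∈ Finset.Icc 1 l, 1 / (k : ℝ) := by
  simp [harmonic_eq_sum_Icc]

lemma stepSum_le (hc : 0 < c) (hC : 1 ≤ C) (l : ℕ) :
    stepSum c C l ≤ 1 / (4 * c) * (1 + Real.log l) := by
  refine le_trans ?_ (mul_le_mul_of_nonneg_left (harmonic_le_one_add_log l) (by positivity))
  rw [harmonic_cast_eq_sum_Icc, Finset.mul_sum]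
  refine Finset.sum_le_sum fun k hk => ?_
  have hk : (0 : ℝ) < k := mod_cast (Finset.mem_Icc.1 hk).1
  rw [one_div_mul_one_div]
  gcongr
  linarith

lemma tendsto_stepSum (hc : 0 < c) (hC : 1 ≤ C) : Tendsto (stepSum c C) atTop atTop := by
  have hlog : Tendsto (fun l : ℕ => Real.log ((l + 1 : ℕ) : ℝ)) atTop atTop :=
    Real.tendsto_log_atTop.comp (tendsto_natCast_atTop_atTop.comp (tendsto_add_atTop_nat 1))
  have hcoeff : 0 < 1 / (4 * c * C) := by positivity
  refine tendsto_atTop_mono (fun l => ?_) (hlog.const_mul_atTop hcoeff)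
  refine (mul_le_mul_of_nonneg_left (log_add_one_le_harmonic l) hcoeff.le).trans ?_
  rw [harmonic_cast_eq_sum_Icc, Finset.mul_sum]
  refine Finset.sum_le_sum fun k hk => ?_
  have hk : (1 : ℝ) ≤ k := mod_cast (Finset.mem_Icc.1 hk).1
  have hpos : 0 < C + (k : ℝ) - 1 := by linarith
  have hle : C + (k : ℝ) - 1 ≤ C * k := by nlinarith
  rw [one_div_mul_one_div, mul_assoc (4 * c)]
  gcongr

lemma mul_exp_stepSum_le {B K : ℝ} (hc : 0 < c) (hK : 0 ≤ K) (hKc : K ≤ 4 * c) (hB : 0 ≤ B)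
    (hBc : B * Real.exp 1 ≤ c) (hC : 1 ≤ C) (hl : 1 ≤ l) :
    B * Real.exp (K * stepSum c C l) ≤ c * (C + l) := by
  have hl : (1 : ℝ) ≤ l := mod_cast hl
  have hlog : K * stepSum c C l ≤ 1 + Real.log l :=
    calc K * stepSum c C l ≤ K * (1 / (4 * c) * (1 + Real.log l)) :=
          mul_le_mul_of_nonneg_left (stepSum_le hc hC l) hK
      _ = K / (4 * c) * (1 + Real.log l) := by ring
      _ ≤ 1 + Real.log l := mul_le_of_le_one_left (by linarith [Real.log_nonneg hl])
        ((div_le_one (by positivity)).2 hKc)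
  calc B * Real.exp (K * stepSum c C l) ≤ B * Real.exp (1 + Real.log l) := by gcongr
    _ = B * Real.exp 1 * l := by rw [Real.exp_add, Real.exp_log (by positivity), mul_assoc]
    _ ≤ c * (C + l) := by gcongr; linarith

end TimePartition

theorem statement_0_general (n : ℕ) (ν : ℝ) (hν : 0 < ν) (h : Fin n → E n → ℝ)
    (hsmooth : ∀ i, ContDiff ℝ (⊤ : ℕ∞) (h i))
    (hbdd : ∀ i m, ∃ C, ∀ x, ‖iteratedFDeriv ℝ m (h i) x‖ ≤ C) :
    ∃ (u : Fin n → ℝ → E n → ℝ) (C₀ Cn : ℝ),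
      0 < Cn ∧
      (∀ i x, |h i x| ≤ C₀) ∧
      (∀ i, ContinuousOn (fun p : ℝ × E n => u i p.1 p.2) (Ici 0 ×ˢ univ)) ∧
      (∀ i x, ∀ t ∈ Ioi (0:ℝ), DifferentiableAt ℝ (fun s => u i s x) t) ∧
      (∀ i, ∀ t ∈ Ici (0:ℝ), Differentiable ℝ (u i t) ∧ ∀ j,
        Differentiable ℝ (pd (u i t) j) ∧ Continuous (pd (u i t) j) ∧
        ∀ k, Continuous (pd (pd (u i t) j) k)) ∧
      (∀ i x, ∀ t ∈ Ioi (0:ℝ), deriv (fun s => u i s x) t =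
        ν * ∑ j, pd (pd (u i t) j) j x - ∑ j, u j t x * pd (u i t) j x) ∧
      (∀ i x, u i 0 x = h i x) ∧
      Tendsto (fun l : ℕ => ∑ k ∈ Finset.Icc 1 l, 1 / (4 * Cn * (C₀ + (k:ℝ) - 1)))
        atTop atTop ∧
      (∀ l : ℕ, 1 ≤ l → ∀ i,
        norm12 (∑ k ∈ Finset.Icc 1 l, 1 / (4 * Cn * (C₀ + (k:ℝ) - 1))) (u i)
          ≤ Cn * (C₀ + l)) := by
  have hh : ∀ m i, SlabBddC m fun _ => h i := fun _ i =>
    slabBddC_of_norm_iteratedFDeriv_le (hsmooth i) (hbdd i)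
  obtain ⟨M, hM, hhM⟩ := exists_forall_abs_le fun i => (hh 0 i).exists_abs_le_const
  obtain ⟨u, hu, K, B, hK, hB, hnorm⟩ := exists_isBurgersSolution hν hh
  have hBe : 0 ≤ B * Real.exp 1 := by positivity
  have hc : 0 < K + B * Real.exp 1 := by positivity
  have hM1 : 1 ≤ M + 1 := by linarith
  refine ⟨u, M + 1, K + B * Real.exp 1, hc, fun i x => (hhM i x).trans (by linarith),
    hu.continuousOn, fun i x t ht => (hu.hasDerivAt i t (le_of_lt ht) x).differentiableAt,
    fun i t ht => ⟨hu.differentiable i t ht, fun j => ⟨hu.differentiable_pd i t ht j,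
      hu.continuous_pd i t ht j, hu.continuous_pd_pd i t ht j⟩⟩,
    fun i x t ht => (hu.hasDerivAt i t (le_of_lt ht) x).deriv,
    fun i x => congrFun (hu.initial i) x, tendsto_stepSum hc hM1, fun l hl i => ?_⟩
  exact (hnorm _ (stepSum_nonneg hc.le (by linarith) l) i).trans
    (mul_exp_stepSum_le hc (by positivity) (by linarith) hB (by linarith) hM1 hl)

/-- Global existence for the multivariate viscous Burgers system with smooth,
polynomially decaying data: there is a global classical solution `u` with
`u(0,·) = h`, and there are constants `C₀ ≥ max_i sup_x |hᵢ|` and `C*ₙ > 0` such that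
with time steps `ρ_l = 1/(4 C*ₙ (C₀ + l - 1))` and `T_l = ρ₁ + ⋯ + ρ_l → ∞`
one has `max_i |uᵢ|_{1,2;[0,T_l]×ℝⁿ} ≤ C*ₙ (C₀ + l)` for all `l ≥ 1`. -/
theorem statement_0 (n : ℕ) (hn : 1 ≤ n) (ν : ℝ) (hν : 0 < ν)
    (h : Fin n → E n → ℝ)
    (hsmooth : ∀ i, ContDiff ℝ (⊤ : ℕ∞) (h i))
    (hdecay : ∀ (i : Fin n) (m K : ℕ), ∃ C : ℝ, ∀ x,
      ‖iteratedFDeriv ℝ m (h i) x‖ ≤ C / (1 + ‖x‖) ^ K) :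
    ∃ (u : Fin n → ℝ → E n → ℝ) (C₀ Cn : ℝ),
      0 < Cn ∧
      (∀ i x, |h i x| ≤ C₀) ∧
      -- u is a classical solution on [0,∞) × ℝⁿ :
      (∀ i, ContinuousOn (fun p : ℝ × E n => u i p.1 p.2) (Ici 0 ×ˢ univ)) ∧
      (∀ i x, ∀ t ∈ Ioi (0:ℝ), DifferentiableAt ℝ (fun s => u i s x) t) ∧
      (∀ i, ∀ t ∈ Ici (0:ℝ), Differentiable ℝ (u i t) ∧ ∀ j,
        Differentiable ℝ (pd (u i t) j) ∧ Continuous (pd (u i t) j) ∧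
        ∀ k, Continuous (pd (pd (u i t) j) k)) ∧
      (∀ i x, ∀ t ∈ Ioi (0:ℝ), deriv (fun s => u i s x) t =
        ν * ∑ j, pd (pd (u i t) j) j x - ∑ j, u j t x * pd (u i t) j x) ∧
      (∀ i x, u i 0 x = h i x) ∧
      -- the time partition T_l = Σ_{k=1}^l ρ_k with ρ_k = 1/(4 C*ₙ (C₀+k−1)) tends to ∞ :
      Tendsto (fun l : ℕ => ∑ k ∈ Finset.Icc 1 l, 1 / (4 * Cn * (C₀ + (k:ℝ) - 1)))
        atTop atTop ∧
      -- at most linear growth of the |·|_{1,2} norm in the time-step index l :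
      (∀ l : ℕ, 1 ≤ l → ∀ i,
        norm12 (∑ k ∈ Finset.Icc 1 l, 1 / (4 * Cn * (C₀ + (k:ℝ) - 1))) (u i)
          ≤ Cn * (C₀ + l)) :=
  statement_0_general n ν hν h hsmooth fun i m => by simpa using hdecay i m 0
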